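/- arXiv:1810.01255 — 2 statements merged into one kernel-verified Lean document; each statement's English description precedes it below -/
import Mathlib

section
/- Let C : ℕ → ℝ² satisfy: (i) ⋃ₙ closedBall(C n, 1) = ℝ²; (ii) for every n ≥ 1, 0 < dist(C n, C (n−1)) ≤ 1 (each disk contains the center of the next disk); and (iii) for every n ≥ 1, the undirected Euclidean angle ∠ C(n−1) C(n) C(n+1) is at least 2π/3. Then liminf_{λ→∞} N_C(λ)·π/(4λ²) ≥ 2π/(2+√3), where the liminf is computed in the extended nonnegative reals. -/
open Metric MeasureTheory Filter Real
open scoped ENNReal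

noncomputable section

/-- The Euclidean plane. -/
abbrev Pt := EuclideanSpace ℝ (Fin 2)

/-- The open square `(−λ,λ) × (−λ,λ)`. -/
def openSquare (l : ℝ) : Set Pt := {p | |p 0| < l ∧ |p 1| < l}

/-- `N_C(λ)`: the extended number of indices `i` such that the closed unit ball centered at
`C i` meets the open square `(−λ,λ) × (−λ,λ)`. -/
def Ncount {ι : Type*} (C : ι → Pt) (l : ℝ) : ℝ≥0∞ :=
  ({i | (closedBall (C i) 1 ∩ openSquare l).Nonempty}.encard : ℕ∞)

/-- The lower density `liminf_{λ→∞} N_C(λ)·π/(4λ²)` of the family of unit disks centered at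
the points `C i`, computed in `ℝ≥0∞`. -/
def lowerDensity {ι : Type*} (C : ι → Pt) : ℝ≥0∞ :=
  Filter.liminf (fun l : ℝ => Ncount C l * ENNReal.ofReal π / ENNReal.ofReal (4 * l ^ 2))
    Filter.atTop

open scoped Topology RealInnerProductSpace

/-!
Cut the plane into the Voronoi cells of the centers. By Euler's relation, in the form of a count of
the extreme points of cells in a generic direction, a cell has at most six sides on average. So it
suffices to bound the area of almost every cell by a linear function of its number `n` of sides
whose value at `n = 6` is `1 + √3 / 2`, and then to compare areas in large squares.

Such a cell lies in the unit disk around its center `p`, on the near side of the bisectors of `p`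
and of the two adjacent centers of the sequence. Moving these bisectors out to distance `1 / 2` from
`p`, one cuts two segments off the disk, and they are disjoint because of the bound on the angle.
The cell is a union of triangles, one over each of its sides. The triangle over a side between
directions `s` and `t` with ends on the circle has area `sin (t - s) / 2`, and the tangent of
`sin / 2` at `π / 6` bounds it by a linear function of `t - s`. A side with ends beyond the arcs, on
the two chords, is treated in the same way after the angle is replaced by a measure on directions
which gives the directions of the chords a suitable density.
-/

/-! ### Voronoi cells in metric spaces -/

section Metric

variable {X : Type*} [PseudoMetricSpace X] {P : Set X} {R : ℝ} {p q y z : X}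

/-- The Voronoi cell of `p` with respect to the sites `P`: the points that are at most as far from
`p` as from any site. -/
def voronoiCell (P : Set X) (p : X) : Set X := {z | ∀ q ∈ P, dist z p ≤ dist z q}

/-- The closed balls of radius `R` centered at `P` cover the space, and `P` is locally finite. -/
structure IsLocallyFiniteCover (P : Set X) (R : ℝ) : Prop where
  finite_inter_closedBall : ∀ z r, (P ∩ closedBall z r).Finite
  exists_dist_le : ∀ z, ∃ p ∈ P, dist z p ≤ R

lemma isClosed_voronoiCell (P : Set X) (p : X) : IsClosed (voronoiCell P p) := by
  simp only [voronoiCell, Set.ofPred_forall]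
  exact isClosed_biInter fun q _ ↦ isClosed_le (by fun_prop) (by fun_prop)

lemma dist_eq_of_mem_voronoiCell (hp : p ∈ P) (hq : q ∈ P) (hzp : z ∈ voronoiCell P p)
    (hzq : z ∈ voronoiCell P q) : dist z p = dist z q :=
  le_antisymm (hzp q hq) (hzq p hp)

lemma mem_voronoiCell_of_dist_eq (hz : z ∈ voronoiCell P p) (h : dist z p = dist z q) :
    z ∈ voronoiCell P q :=
  fun r hr ↦ h ▸ hz r hr

namespace IsLocallyFiniteCover

lemma image (hP : IsLocallyFiniteCover P R) {Y : Type*} [PseudoMetricSpace Y] (φ : X ≃ᵢ Y) :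
    IsLocallyFiniteCover (φ '' P) R where
  finite_inter_closedBall z r := by
    rw [← φ.apply_symm_apply z, ← φ.image_closedBall, ← Set.image_inter φ.injective]
    exact (hP.finite_inter_closedBall _ r).image φ
  exists_dist_le z := by
    obtain ⟨p, hp, hzp⟩ := hP.exists_dist_le (φ.symm z)
    exact ⟨φ p, Set.mem_image_of_mem φ hp, by rwa [← φ.symm.dist_eq, φ.symm_apply_apply]⟩

lemma dist_le (hP : IsLocallyFiniteCover P R) (hz : z ∈ voronoiCell P p) : dist z p ≤ R := by
  obtain ⟨q, hq, hzq⟩ := hP.exists_dist_le z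
  exact (hz q hq).trans hzq

lemma voronoiCell_subset_closedBall (hP : IsLocallyFiniteCover P R) (p : X) :
    voronoiCell P p ⊆ closedBall p R :=
  fun _ hz ↦ hP.dist_le hz

lemma exists_mem_voronoiCell (hP : IsLocallyFiniteCover P R) (z : X) :
    ∃ p ∈ P, z ∈ voronoiCell P p := by
  obtain ⟨p₀, hp₀, hzp₀⟩ := hP.exists_dist_le z
  obtain ⟨p, ⟨hp, hpR⟩, hmin⟩ := Set.exists_min_image _ (fun q ↦ dist z q)
    (hP.finite_inter_closedBall z R) ⟨p₀, hp₀, mem_closedBall'.2 hzp₀⟩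
  refine ⟨p, hp, fun q hq ↦ ?_⟩
  by_cases hqR : dist z q ≤ R
  · exact hmin q ⟨hq, mem_closedBall'.2 hqR⟩
  · exact (mem_closedBall'.1 hpR).trans (not_le.1 hqR).le

lemma eventually_mem_voronoiCell (hP : IsLocallyFiniteCover P R) (hy : y ∈ voronoiCell P p) :
    ∀ᶠ z in 𝓝 y, (∀ q ∈ P, y ∈ voronoiCell P q → dist z p ≤ dist z q) → z ∈ voronoiCell P p := by
  have near : ∀ᶠ z in 𝓝 y, ∀ q ∈ P ∩ closedBall y (R + 1),
      y ∉ voronoiCell P q → dist z p < dist z q := by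
    refine (eventually_all_finite (hP.finite_inter_closedBall y (R + 1))).2 fun q hq ↦ ?_
    by_cases hyq : y ∈ voronoiCell P q
    · exact .of_forall fun z h ↦ absurd hyq h
    · have hlt : dist y p < dist y q :=
        (hy q hq.1).lt_of_ne fun h ↦ hyq (mem_voronoiCell_of_dist_eq hy h)
      have hcont (r : X) : ContinuousAt (fun z ↦ dist z r) y := by fun_prop
      filter_upwards [(hcont p).eventually_lt (hcont q) hlt] with z hz _ using hz
  filter_upwards [near, ball_mem_nhds y (half_pos one_pos)] with z hz hzy hle q hq
  by_cases hyq : y ∈ voronoiCell P q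
  · exact hle q hq hyq
  by_cases hqR : q ∈ closedBall y (R + 1)
  · exact (hz q ⟨hq, hqR⟩ hyq).le
  · have hyR := hP.dist_le hy
    rw [mem_closedBall', not_le] at hqR
    rw [mem_ball] at hzy
    linarith [dist_triangle z y p, dist_triangle_left y q z]

/-- If every site whose cell contains `F c` stayed at least as far as `p`, then `F` could not leave
the cell of `p` right after `c`. -/
lemma exists_mem_voronoiCell_of_isGreatest (hP : IsLocallyFiniteCover P R) {F : ℝ → X}
    (hF : Continuous F) {c : ℝ} (hc : IsGreatest (F ⁻¹' voronoiCell P p) c) :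
    ∃ q ∈ P, F c ∈ voronoiCell P q ∧ ∃ c', dist (F c') q < dist (F c') p := by
  by_contra! hcon
  have hnhds : ∀ᶠ c' in 𝓝[>] c, F c' ∈ voronoiCell P p := by
    refine nhdsWithin_le_nhds ?_
    filter_upwards [hF.continuousAt.eventually (hP.eventually_mem_voronoiCell hc.1)] with c' hc'
    exact hc' fun q hq hcq ↦ hcon q hq hcq c'
  obtain ⟨c', hmem, hlt⟩ := (hnhds.and self_mem_nhdsWithin).exists
  exact (hc.2 hmem).not_gt hlt

end IsLocallyFiniteCover

end Metric

/-! ### Voronoi cells in inner product spaces -/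

section Inner

variable {E : Type*} [NormedAddCommGroup E] [InnerProductSpace ℝ E] {P : Set E} {R : ℝ}
  {p q v x z : E}

lemma dist_sq_eq_add_inner (p q z : E) :
    dist z q ^ 2 = dist z p ^ 2 + (‖q - p‖ ^ 2 - 2 * ⟪z - p, q - p⟫) := by
  rw [dist_eq_norm, dist_eq_norm, ← sub_sub_sub_cancel_right z q p, norm_sub_sq_real]
  ring

lemma dist_le_dist_iff_inner : dist z p ≤ dist z q ↔ 2 * ⟪z - p, q - p⟫ ≤ ‖q - p‖ ^ 2 := by
  rw [← pow_le_pow_iff_left₀ dist_nonneg dist_nonneg two_ne_zero, dist_sq_eq_add_inner p q,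
    le_add_iff_nonneg_right, sub_nonneg]

lemma dist_eq_dist_iff_inner : dist z p = dist z q ↔ 2 * ⟪z - p, q - p⟫ = ‖q - p‖ ^ 2 := by
  rw [← pow_left_inj₀ dist_nonneg dist_nonneg two_ne_zero, dist_sq_eq_add_inner p q,
    left_eq_add, sub_eq_zero, eq_comm]

lemma IsLocallyFiniteCover.isCompact_setOf_add_smul_mem [ProperSpace E]
    (hP : IsLocallyFiniteCover P R) (hv : v ≠ 0) (a : E) (p : E) :
    IsCompact ((fun c : ℝ ↦ a + c • v) ⁻¹' voronoiCell P p) := by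
  have hcell : IsCompact (voronoiCell P p) :=
    isCompact_of_isClosed_isBounded (isClosed_voronoiCell P p)
      (isBounded_closedBall.subset (hP.voronoiCell_subset_closedBall p))
  exact ((Homeomorph.addLeft a).isClosedEmbedding.comp
    (isClosedEmbedding_smul_left hv)).isCompact_preimage hcell

/-- Following the ray from `p` through `x` until it leaves the cell. -/
lemma IsLocallyFiniteCover.exists_mem_segment_of_mem_voronoiCell [ProperSpace E]
    (hP : IsLocallyFiniteCover P R) (hx : x ∈ voronoiCell P p) (hxp : x ≠ p) :
    ∃ q ∈ P, q ≠ p ∧ ∃ y ∈ voronoiCell P p ∩ voronoiCell P q, x ∈ segment ℝ p y := by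
  have hcompact := hP.isCompact_setOf_add_smul_mem (sub_ne_zero.2 hxp) p p
  have hone : (1 : ℝ) ∈ (fun c : ℝ ↦ p + c • (x - p)) ⁻¹' voronoiCell P p := by
    simpa using hx
  obtain ⟨c, hc⟩ := hcompact.exists_isGreatest ⟨1, hone⟩
  obtain ⟨q, hq, hcq, c', hc'⟩ := hP.exists_mem_voronoiCell_of_isGreatest (by fun_prop) hc
  refine ⟨q, hq, fun h ↦ hc'.ne (h ▸ rfl), p + c • (x - p), ⟨hc.1, hcq⟩, ?_⟩
  have hc1 : 1 ≤ c := hc.2 hone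
  rw [segment_eq_image']
  refine ⟨c⁻¹, ⟨by positivity, inv_le_one_of_one_le₀ hc1⟩, ?_⟩
  simp [smul_smul, (one_pos.trans_le hc1).ne']

end Inner

/-! ### Bisectors in the plane -/

section Bisector

variable {p q q' z : ℂ} {s : ℝ}

/-- The signed area of the parallelogram spanned by `u` and `v`. -/
def cross (u v : ℂ) : ℝ := u.re * v.im - u.im * v.re

lemma cross_swap (u v : ℂ) : cross v u = -cross u v := by
  unfold cross
  ring

/-- The open convex cone swept counterclockwise from `u` to `v`, when `0 < cross u v`. -/
def openCone (u v : ℂ) : Set ℂ := {z | 0 < cross u z ∧ 0 < cross z v}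

lemma inner_I_mul (u v : ℂ) : ⟪Complex.I * u, v⟫ = cross u v := by
  simp [cross]
  ring

lemma norm_sq_smul_eq (u v : ℂ) : ‖u‖ ^ 2 • v = ⟪u, v⟫ • u + cross u v • (Complex.I * u) := by
  apply Complex.ext <;>
    simp [Complex.sq_norm, Complex.normSq_apply, cross] <;> ring

/-- The affine parametrization of the perpendicular bisector of `p` and `q` that starts at the
midpoint and has velocity `I * (q - p)`. -/
def bisectorPoint (p q : ℂ) (s : ℝ) : ℂ := midpoint ℝ p q + s • (Complex.I * (q - p))

lemma bisectorPoint_sub (p q : ℂ) (s : ℝ) :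
    bisectorPoint p q s - p = (2⁻¹ : ℝ) • (q - p) + s • (Complex.I * (q - p)) := by
  simp [bisectorPoint, midpoint_eq_smul_add]
  ring

lemma inner_bisectorPoint_sub (p q w : ℂ) (s : ℝ) :
    ⟪bisectorPoint p q s - p, w⟫ = ⟪q - p, w⟫ / 2 + s * cross (q - p) w := by
  rw [bisectorPoint_sub, inner_add_left, real_inner_smul_left, real_inner_smul_left, inner_I_mul]
  ring

lemma cross_bisectorPoint_sub (p q w : ℂ) (s : ℝ) :
    cross (bisectorPoint p q s - p) w = cross (q - p) w / 2 - s * ⟪q - p, w⟫ := by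
  simp [bisectorPoint_sub, cross]
  ring

lemma cross_bisectorPoint_sub_bisectorPoint_sub (p q : ℂ) (s s' : ℝ) :
    cross (bisectorPoint p q s - p) (bisectorPoint p q s' - p) = (s' - s) * ‖q - p‖ ^ 2 / 2 := by
  simp [bisectorPoint_sub, cross, Complex.sq_norm, Complex.normSq_apply]
  ring

lemma dist_bisectorPoint_le_dist_iff {r : ℂ} :
    dist (bisectorPoint p q s) p ≤ dist (bisectorPoint p q s) r ↔
      ⟪q - p, r - p⟫ + 2 * s * cross (q - p) (r - p) ≤ ‖r - p‖ ^ 2 := by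
  rw [dist_le_dist_iff_inner, inner_bisectorPoint_sub]
  ring_nf

lemma dist_bisectorPoint_eq_dist_iff {r : ℂ} :
    dist (bisectorPoint p q s) p = dist (bisectorPoint p q s) r ↔
      ⟪q - p, r - p⟫ + 2 * s * cross (q - p) (r - p) = ‖r - p‖ ^ 2 := by
  rw [dist_eq_dist_iff_inner, inner_bisectorPoint_sub]
  ring_nf

lemma dist_bisectorPoint (p q : ℂ) (s : ℝ) :
    dist (bisectorPoint p q s) p = dist (bisectorPoint p q s) q := by
  rw [dist_bisectorPoint_eq_dist_iff, real_inner_self_eq_norm_sq, cross]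
  ring

lemma exists_eq_bisectorPoint (hqp : q ≠ p) (h : dist z p = dist z q) :
    ∃ s, z = bisectorPoint p q s := by
  have hu : ‖q - p‖ ^ 2 ≠ 0 := by simpa [sub_eq_zero] using hqp
  rw [dist_eq_dist_iff_inner, real_inner_comm] at h
  refine ⟨cross (q - p) (z - p) / ‖q - p‖ ^ 2, ?_⟩
  rw [← sub_left_inj (a := p), bisectorPoint_sub, ← smul_right_injective ℂ hu |>.eq_iff]
  rw [norm_sq_smul_eq, smul_add, smul_smul, smul_smul, mul_div_cancel₀ _ hu,
    show ⟪q - p, z - p⟫ = ‖q - p‖ ^ 2 * 2⁻¹ by linarith]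

/-- For parallel `q - p` and `q' - p`, the bisectors of `p, q` and of `p, q'` are parallel. -/
lemma eq_of_cross_eq_zero (hqp : q ≠ p) (hqp' : q' ≠ p) (h : dist z p = dist z q)
    (h' : dist z p = dist z q') (hcross : cross (q - p) (q' - p) = 0) : q = q' := by
  rw [dist_eq_dist_iff_inner] at h h'
  have hu : 0 < ‖q - p‖ ^ 2 := by have := sub_ne_zero.2 hqp; positivity
  have hu' : 0 < ‖q' - p‖ ^ 2 := by have := sub_ne_zero.2 hqp'; positivity
  have hpar : ‖q - p‖ ^ 2 • (q' - p) = ⟪q - p, q' - p⟫ • (q - p) := by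
    rw [norm_sq_smul_eq, hcross, zero_smul, add_zero]
  have hnorm := congrArg (fun w ↦ ⟪w, q' - p⟫) hpar
  have hinner := congrArg (fun w ↦ ⟪z - p, w⟫) hpar
  simp only [real_inner_smul_left, real_inner_smul_right, real_inner_self_eq_norm_sq]
    at hnorm hinner
  have hk : ⟪q - p, q' - p⟫ = ‖q' - p‖ ^ 2 := by
    apply mul_left_cancel₀ hu.ne'
    linear_combination ‖q - p‖ ^ 2 * h' - 2 * hinner - ⟪q - p, q' - p⟫ * h
  rw [hk] at hnorm hpar
  rw [mul_right_cancel₀ hu'.ne' hnorm] at hpar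
  exact sub_left_injective (smul_right_injective ℂ hu'.ne' hpar).symm

end Bisector

/-! ### Sides of planar Voronoi cells -/

section Sides

variable {P : Set ℂ} {R : ℝ} {p q q' z : ℂ} {s : ℝ}

/-- The parameters of the points of the bisector of `p` and `q` that lie in the cell of `p`. -/
def sideParams (P : Set ℂ) (p q : ℂ) : Set ℝ := bisectorPoint p q ⁻¹' voronoiCell P p

/-- The parameter of the first point of the side of the cell of `p` facing `q`. -/
def sideMin (P : Set ℂ) (p q : ℂ) : ℝ := sInf (sideParams P p q)

/-- The parameter of the last point of the side of the cell of `p` facing `q`. -/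
def sideMax (P : Set ℂ) (p q : ℂ) : ℝ := sSup (sideParams P p q)

/-- The sites, other than `p`, whose cell meets the cell of `p`, possibly in a single point. -/
def neighbors (P : Set ℂ) (p : ℂ) : Set ℂ := {q ∈ P | q ≠ p ∧ (sideParams P p q).Nonempty}

/-- The sides of the cell of `p`, each represented by the site that it faces. -/
def sides (P : Set ℂ) (p : ℂ) : Set ℂ := {q ∈ neighbors P p | sideMin P p q < sideMax P p q}

/-- The first point, in counterclockwise order, of the side of the cell of `p` facing `q`. -/
def sideStart (P : Set ℂ) (p q : ℂ) : ℂ := bisectorPoint p q (sideMin P p q)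

/-- The last point, in counterclockwise order, of the side of the cell of `p` facing `q`. -/
def sideEnd (P : Set ℂ) (p q : ℂ) : ℂ := bisectorPoint p q (sideMax P p q)

lemma mem_sideParams_iff :
    s ∈ sideParams P p q ↔
      ∀ r ∈ P, ⟪q - p, r - p⟫ + 2 * s * cross (q - p) (r - p) ≤ ‖r - p‖ ^ 2 :=
  forall₂_congr fun _ _ ↦ dist_bisectorPoint_le_dist_iff

lemma bisectorPoint_mem_voronoiCell_right (hs : s ∈ sideParams P p q) :
    bisectorPoint p q s ∈ voronoiCell P q :=
  mem_voronoiCell_of_dist_eq hs (dist_bisectorPoint p q s)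

lemma convex_sideParams (P : Set ℂ) (p q : ℂ) : Convex ℝ (sideParams P p q) := by
  intro s hs t ht a b ha hb hab
  rw [mem_sideParams_iff] at hs ht ⊢
  intro r hr
  have := add_le_add (mul_le_mul_of_nonneg_left (hs r hr) ha)
    (mul_le_mul_of_nonneg_left (ht r hr) hb)
  rw [smul_eq_mul, smul_eq_mul]
  linear_combination this + (‖r - p‖ ^ 2 - ⟪q - p, r - p⟫) * hab

lemma cross_sideStart_sub_sideEnd_sub (P : Set ℂ) (p q : ℂ) :
    cross (sideStart P p q - p) (sideEnd P p q - p) =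
      (sideMax P p q - sideMin P p q) * ‖q - p‖ ^ 2 / 2 :=
  cross_bisectorPoint_sub_bisectorPoint_sub ..

lemma cross_sideStart_sub_sideEnd_sub_pos (hq : q ∈ sides P p) :
    0 < cross (sideStart P p q - p) (sideEnd P p q - p) := by
  have hlen := sub_pos.2 hq.2
  have hqp := sub_ne_zero.2 hq.1.2.1
  rw [cross_sideStart_sub_sideEnd_sub]
  positivity

namespace IsLocallyFiniteCover

lemma isCompact_sideParams (hP : IsLocallyFiniteCover P R) (hqp : q ≠ p) :
    IsCompact (sideParams P p q) :=
  hP.isCompact_setOf_add_smul_mem (mul_ne_zero Complex.I_ne_zero (sub_ne_zero.2 hqp)) _ p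

lemma isLeast_sideMin (hP : IsLocallyFiniteCover P R) (hq : q ∈ neighbors P p) :
    IsLeast (sideParams P p q) (sideMin P p q) :=
  (hP.isCompact_sideParams hq.2.1).isLeast_sInf hq.2.2

lemma isGreatest_sideMax (hP : IsLocallyFiniteCover P R) (hq : q ∈ neighbors P p) :
    IsGreatest (sideParams P p q) (sideMax P p q) :=
  (hP.isCompact_sideParams hq.2.1).isGreatest_sSup hq.2.2

lemma finite_neighbors (hP : IsLocallyFiniteCover P R) (p : ℂ) : (neighbors P p).Finite := by
  refine (hP.finite_inter_closedBall p (R + R)).subset ?_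
  rintro q ⟨hq, -, s, hs⟩
  refine ⟨hq, (dist_triangle_left q p (bisectorPoint p q s)).trans (add_le_add ?_ ?_)⟩
  · exact hP.dist_le (bisectorPoint_mem_voronoiCell_right hs)
  · exact hP.dist_le hs

lemma finite_sides (hP : IsLocallyFiniteCover P R) (p : ℂ) : (sides P p).Finite :=
  (hP.finite_neighbors p).subset (Set.sep_subset _ _)

lemma exists_third_site_sideEnd (hP : IsLocallyFiniteCover P R) (hq : q ∈ neighbors P p) :
    ∃ r ∈ P, r ≠ p ∧ r ≠ q ∧ sideEnd P p q ∈ voronoiCell P r := by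
  have hcont : Continuous (bisectorPoint p q) := by
    unfold bisectorPoint
    fun_prop
  obtain ⟨r, hr, hmem, s, hs⟩ :=
    hP.exists_mem_voronoiCell_of_isGreatest hcont (hP.isGreatest_sideMax hq)
  refine ⟨r, hr, ?_, ?_, hmem⟩
  · rintro rfl
    exact hs.ne rfl
  · rintro rfl
    exact hs.ne (dist_bisectorPoint p r s).symm

/-- Walking along the side facing `q` towards its last point approaches `q'`. -/
lemma cross_nonneg_of_dist_sideEnd_eq (hP : IsLocallyFiniteCover P R) (hq : q ∈ sides P p)
    (hq' : q' ∈ P) (h : dist (sideEnd P p q) p = dist (sideEnd P p q) q') :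
    0 ≤ cross (q - p) (q' - p) := by
  have hmin := mem_sideParams_iff.1 (hP.isLeast_sideMin hq.1).1 q' hq'
  have hmax := dist_bisectorPoint_eq_dist_iff.1 h
  refine nonneg_of_mul_nonneg_right ?_ (sub_pos.2 hq.2)
  linarith

lemma sideEnd_injOn (hP : IsLocallyFiniteCover P R) (p : ℂ) :
    Set.InjOn (sideEnd P p) (sides P p) := by
  intro q hq q' hq' h
  have hdist : dist (sideEnd P p q) p = dist (sideEnd P p q) q := dist_bisectorPoint ..
  have hdist' : dist (sideEnd P p q) p = dist (sideEnd P p q) q' := by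
    rw [h]
    exact dist_bisectorPoint ..
  have hcross := hP.cross_nonneg_of_dist_sideEnd_eq hq hq'.1.1 hdist'
  have hcross' := hP.cross_nonneg_of_dist_sideEnd_eq hq' hq.1.1 (h ▸ hdist)
  rw [cross_swap, neg_nonneg] at hcross'
  exact eq_of_cross_eq_zero hq.1.2.1 hq'.1.2.1 hdist hdist' (hcross'.antisymm hcross)

end IsLocallyFiniteCover

/-- The directions in which the side of the cell of `p` facing `q` is seen from `p`. -/
def sideCone (P : Set ℂ) (p q : ℂ) : Set ℂ :=
  openCone (sideStart P p q - p) (sideEnd P p q - p)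

lemma inner_pos_of_mem_sideCone (hq : q ∈ sides P p) (hz : z ∈ sideCone P p q) :
    0 < ⟪q - p, z⟫ := by
  obtain ⟨hstart, hend⟩ := hz
  rw [sideStart, cross_bisectorPoint_sub] at hstart
  rw [cross_swap, sideEnd, cross_bisectorPoint_sub] at hend
  refine pos_of_mul_pos_right ?_ (sub_pos.2 hq.2).le
  linarith

/-- The ray from `p` in a direction of the cone of a side meets the interior of that side. -/
lemma exists_add_smul_eq_bisectorPoint (hq : q ∈ sides P p) (hz : z ∈ sideCone P p q) :
    ∃ c s : ℝ, sideMin P p q < s ∧ s < sideMax P p q ∧ p + c • z = bisectorPoint p q s := by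
  have hpos := inner_pos_of_mem_sideCone hq hz
  obtain ⟨hstart, hend⟩ := hz
  rw [sideStart, cross_bisectorPoint_sub] at hstart
  rw [cross_swap, sideEnd, cross_bisectorPoint_sub] at hend
  refine ⟨‖q - p‖ ^ 2 / (2 * ⟪q - p, z⟫), cross (q - p) z / (2 * ⟪q - p, z⟫), ?_, ?_, ?_⟩
  · rw [lt_div_iff₀ (by positivity)]
    linarith
  · rw [div_lt_iff₀ (by positivity)]
    linarith
  · rw [← eq_sub_iff_add_eq', bisectorPoint_sub, div_eq_inv_mul, mul_smul, norm_sq_smul_eq,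
      smul_add, smul_smul, smul_smul, ← div_eq_inv_mul, ← div_eq_inv_mul,
      div_mul_cancel_right₀ hpos.ne']

lemma IsLocallyFiniteCover.cross_eq_zero_of_interior (hP : IsLocallyFiniteCover P R)
    (hq : q ∈ neighbors P p) (hq' : q' ∈ P) (hmin : sideMin P p q < s) (hmax : s < sideMax P p q)
    (h : dist (bisectorPoint p q s) p = dist (bisectorPoint p q s) q') :
    cross (q - p) (q' - p) = 0 := by
  have hstart := mem_sideParams_iff.1 (hP.isLeast_sideMin hq).1 q' hq'
  have hend := mem_sideParams_iff.1 (hP.isGreatest_sideMax hq).1 q' hq'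
  have hmid := dist_bisectorPoint_eq_dist_iff.1 h
  apply le_antisymm
  · refine nonpos_of_mul_nonpos_right ?_ (sub_pos.2 hmax)
    linarith
  · refine nonneg_of_mul_nonneg_right ?_ (sub_pos.2 hmin)
    linarith

/-- A ray from `p` leaves the half-plane of points closer to `p` than to `q'` only once, so it
cannot meet the side facing `q` strictly after the bisector of `p` and `q'`. -/
lemma le_of_add_smul_mem_voronoiCell {c c' s' : ℝ} (hq' : q' ∈ P)
    (hc : p + c • z ∈ voronoiCell P p) (hc' : p + c' • z = bisectorPoint p q' s')
    (hpos : 0 < ⟪q' - p, z⟫) : c ≤ c' := by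
  have hle := dist_le_dist_iff_inner.1 (hc q' hq')
  have heq := dist_eq_dist_iff_inner.1 (dist_bisectorPoint p q' s')
  rw [← hc'] at heq
  simp only [add_sub_cancel_left, real_inner_smul_left, real_inner_comm _ z] at hle heq
  refine le_of_mul_le_mul_right ?_ hpos
  linarith

lemma IsLocallyFiniteCover.pairwiseDisjoint_sideCone (hP : IsLocallyFiniteCover P R) (p : ℂ) :
    (sides P p).PairwiseDisjoint (sideCone P p) := by
  intro q hq q' hq'
  contrapose!
  rw [Function.onFun, Set.not_disjoint_iff]
  rintro ⟨z, hz, hz'⟩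
  obtain ⟨c, s, hmin, hmax, hc⟩ := exists_add_smul_eq_bisectorPoint hq hz
  obtain ⟨c', s', hmin', hmax', hc'⟩ := exists_add_smul_eq_bisectorPoint hq' hz'
  have hmem : p + c • z ∈ voronoiCell P p := hc ▸
    (convex_sideParams P p q).ordConnected.out (hP.isLeast_sideMin hq.1).1
      (hP.isGreatest_sideMax hq.1).1 ⟨hmin.le, hmax.le⟩
  have hmem' : p + c' • z ∈ voronoiCell P p := hc' ▸
    (convex_sideParams P p q').ordConnected.out (hP.isLeast_sideMin hq'.1).1
      (hP.isGreatest_sideMax hq'.1).1 ⟨hmin'.le, hmax'.le⟩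
  obtain rfl : c = c' :=
    (le_of_add_smul_mem_voronoiCell hq'.1.1 hmem hc' (inner_pos_of_mem_sideCone hq' hz')).antisymm
      (le_of_add_smul_mem_voronoiCell hq.1.1 hmem' hc (inner_pos_of_mem_sideCone hq hz))
  have hdist := dist_bisectorPoint p q s
  have hdist' := dist_bisectorPoint p q' s'
  rw [← hc', hc] at hdist'
  exact eq_of_cross_eq_zero hq.1.2.1 hq'.1.2.1 hdist hdist'
    (hP.cross_eq_zero_of_interior hq.1 hq'.1.1 hmin hmax hdist')

lemma bisectorPoint_mem_segment {a b : ℝ} (h : s ∈ Set.Icc a b) :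
    bisectorPoint p q s ∈ segment ℝ (bisectorPoint p q a) (bisectorPoint p q b) := by
  rw [← segment_eq_Icc (h.1.trans h.2)] at h
  obtain ⟨x, y, hx, hy, hxy, rfl⟩ := h
  refine ⟨x, y, hx, hy, hxy, ?_⟩
  simp only [bisectorPoint, smul_add, add_smul, smul_smul, smul_eq_mul]
  rw [add_add_add_comm, ← add_smul, hxy, one_smul]

lemma IsLocallyFiniteCover.voronoiCell_subset_triangles (hP : IsLocallyFiniteCover P R)
    (hp : p ∈ P) :
    voronoiCell P p ⊆
      {p} ∪ ⋃ q ∈ neighbors P p, convexHull ℝ {p, sideStart P p q, sideEnd P p q} := by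
  intro x hx
  obtain rfl | hxp := eq_or_ne x p
  · exact .inl rfl
  obtain ⟨q, hq, hqp, y, ⟨hyp, hyq⟩, hxy⟩ := hP.exists_mem_segment_of_mem_voronoiCell hx hxp
  obtain ⟨s, rfl⟩ := exists_eq_bisectorPoint hqp (dist_eq_of_mem_voronoiCell hp hq hyp hyq)
  have hqn : q ∈ neighbors P p := ⟨hq, hqp, s, hyp⟩
  have hys := bisectorPoint_mem_segment (p := p) (q := q)
    ⟨(hP.isLeast_sideMin hqn).2 hyp, (hP.isGreatest_sideMax hqn).2 hyp⟩
  refine .inr (Set.mem_iUnion₂.2 ⟨q, hqn, ?_⟩)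
  rw [convexHull_insert (Set.insert_nonempty _ _), convexHull_pair, convexJoin_singleton_left]
  exact Set.mem_iUnion₂.2 ⟨_, hys, hxy⟩

end Sides

/-! ### Areas of triangles and cells -/

section Area

variable {P : Set ℂ} {R : ℝ} {p : ℂ}

lemma convexHull_zero_one_I :
    convexHull ℝ {0, 1, Complex.I} = {z : ℂ | 0 ≤ z.re ∧ 0 ≤ z.im ∧ z.re + z.im ≤ 1} := by
  apply Set.Subset.antisymm
  · refine convexHull_min ?_ ?_
    · simp [Set.insert_subset_iff]
    · exact (convex_halfSpace_re_ge 0).inter ((convex_halfSpace_im_ge 0).inter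
        (convex_halfSpace_le (Complex.reLm + Complex.imLm).isLinear 1))
  · rintro z ⟨hre, him, hsum⟩
    refine mem_convexHull_of_exists_fintype ![1 - z.re - z.im, z.re, z.im] ![0, 1, Complex.I]
      ?_ ?_ ?_ ?_
    · simp [Fin.forall_fin_succ, hre, him]
      linarith
    · simp [Fin.sum_univ_succ]
    · simp [Fin.forall_fin_succ]
    · simp [Fin.sum_univ_succ]

lemma volume_convexHull_zero_one_I :
    volume (convexHull ℝ {0, 1, Complex.I}) = ENNReal.ofReal 2⁻¹ := by
  set T : Set (ℝ × ℝ) := {z | 0 ≤ z.1 ∧ 0 ≤ z.2 ∧ z.1 + z.2 ≤ 1}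
  have hT : MeasurableSet T := by measurability
  have hsection (x : ℝ) : volume (Prod.mk x ⁻¹' T) =
      (Set.Icc (0 : ℝ) 1).indicator (fun x ↦ ENNReal.ofReal (1 - x)) x := by
    by_cases hx : x ∈ Set.Icc (0 : ℝ) 1
    · have : Prod.mk x ⁻¹' T = Set.Icc 0 (1 - x) := by
        ext y
        simp [T, hx.1, le_sub_iff_add_le']
      rw [Set.indicator_of_mem hx, this, Real.volume_Icc, sub_zero]
    · have : Prod.mk x ⁻¹' T = ∅ := by
        refine Set.eq_empty_of_forall_notMem fun y ⟨h0, h1, h2⟩ ↦ hx ⟨h0, ?_⟩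
        simp only at h1 h2
        linarith
      rw [Set.indicator_of_notMem hx, this, measure_empty]
  rw [convexHull_zero_one_I, show {z : ℂ | 0 ≤ z.re ∧ 0 ≤ z.im ∧ z.re + z.im ≤ 1} =
    Complex.measurableEquivRealProd ⁻¹' T from rfl,
    Complex.volume_preserving_equiv_real_prod.measure_preimage_equiv, Measure.volume_eq_prod,
    Measure.prod_apply hT, funext hsection, lintegral_indicator measurableSet_Icc,
    ← ofReal_integral_eq_lintegral_ofReal (Continuous.integrableOn_Icc (by fun_prop))
      (ae_restrict_of_forall_mem measurableSet_Icc fun x hx ↦ sub_nonneg.2 hx.2),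
    integral_Icc_eq_integral_Ioc, ← intervalIntegral.integral_of_le zero_le_one,
    intervalIntegral.integral_sub (by simp) (by simp)]
  norm_num

/-- The linear map sending `1` to `x` and `I` to `y`. -/
def linearMapOfOneI (x y : ℂ) : ℂ →ₗ[ℝ] ℂ :=
  Complex.reLm.smulRight x + Complex.imLm.smulRight y

lemma det_linearMapOfOneI (x y : ℂ) : LinearMap.det (linearMapOfOneI x y) = cross x y := by
  rw [← LinearMap.det_toMatrix Complex.basisOneI, Matrix.det_fin_two]
  simp [LinearMap.toMatrix_apply, linearMapOfOneI, cross]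
  ring

open scoped Pointwise in
lemma volume_convexHull_triple (p x y : ℂ) :
    volume (convexHull ℝ {p, x, y}) = ENNReal.ofReal (|cross (x - p) (y - p)| / 2) := by
  have himage : convexHull ℝ {p, x, y} =
      p +ᵥ linearMapOfOneI (x - p) (y - p) '' convexHull ℝ {0, 1, Complex.I} := by
    rw [LinearMap.image_convexHull, ← convexHull_vadd]
    simp [Set.image_insert_eq, linearMapOfOneI, ← Set.image_vadd]
  rw [himage, measure_vadd, Measure.addHaar_image_linearMap, det_linearMapOfOneI,
    volume_convexHull_zero_one_I, ← ENNReal.ofReal_mul (abs_nonneg _), div_eq_mul_inv]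

lemma IsLocallyFiniteCover.volume_voronoiCell_le (hP : IsLocallyFiniteCover P R) (hp : p ∈ P) :
    volume (voronoiCell P p) ≤ ∑ q ∈ (hP.finite_sides p).toFinset,
      ENNReal.ofReal (cross (sideStart P p q - p) (sideEnd P p q - p) / 2) := by
  have hdegenerate (q : ℂ) (hq : q ∈ neighbors P p) (hqs : q ∉ sides P p) :
      cross (sideStart P p q - p) (sideEnd P p q - p) = 0 := by
    have : sideMax P p q = sideMin P p q :=
      (not_lt.1 fun h ↦ hqs ⟨hq, h⟩).antisymm
        ((hP.isLeast_sideMin hq).2 (hP.isGreatest_sideMax hq).1)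
    rw [cross_sideStart_sub_sideEnd_sub, this, sub_self, zero_mul, zero_div]
  calc volume (voronoiCell P p)
      ≤ volume ({p} ∪ ⋃ q ∈ (hP.finite_neighbors p).toFinset,
          convexHull ℝ {p, sideStart P p q, sideEnd P p q}) :=
        measure_mono (by simpa using hP.voronoiCell_subset_triangles hp)
    _ ≤ ∑ q ∈ (hP.finite_neighbors p).toFinset,
          volume (convexHull ℝ {p, sideStart P p q, sideEnd P p q}) := by
        grw [measure_union_le, measure_singleton, zero_add, measure_biUnion_finset_le]
    _ = ∑ q ∈ (hP.finite_neighbors p).toFinset,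
          ENNReal.ofReal (|cross (sideStart P p q - p) (sideEnd P p q - p)| / 2) := by
        simp only [volume_convexHull_triple]
    _ = ∑ q ∈ (hP.finite_sides p).toFinset,
          ENNReal.ofReal (|cross (sideStart P p q - p) (sideEnd P p q - p)| / 2) := by
        refine (Finset.sum_subset ?_ fun q hq hqs ↦ ?_).symm
        · exact Set.Finite.toFinset_mono (Set.sep_subset _ _)
        · rw [hdegenerate q (by simpa using hq) (by simpa using hqs)]
          simp
    _ = _ := by
        refine Finset.sum_congr rfl fun q hq ↦ ?_
        rw [abs_of_pos (cross_sideStart_sub_sideEnd_sub_pos (by simpa using hq))]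

end Area

/-! ### The average number of sides -/

section Euler

variable {P : Set ℂ} {R : ℝ} {a b p u v x : ℂ}

lemma exists_injOn_inner {E : Type*} [NormedAddCommGroup E] [InnerProductSpace ℝ E] {S : Set E}
    (hS : S.Finite) : ∃ u : E, Set.InjOn (fun x ↦ ⟪u, x⟫) S := by
  have := (hS.offDiag).to_subtype
  obtain ⟨u, hu⟩ := Module.Dual.exists_forall_ne_zero_of_forall_exists
    (fun xy : S.offDiag ↦ innerₗ E (xy.1.1 - xy.1.2)) fun xy ↦
      ⟨xy.1.1 - xy.1.2, inner_self_ne_zero.2 (sub_ne_zero.2 xy.2.2.2)⟩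
  refine ⟨u, fun x hx y hy hxy ↦ by_contra fun hne ↦ hu ⟨(x, y), hx, hy, hne⟩ ?_⟩
  rw [innerₗ_apply_apply, real_inner_comm, inner_sub_right]
  exact sub_eq_zero.2 hxy

lemma exists_injOn_inner_and_injOn_cross {V B : Set ℂ} (hV : V.Finite) (hB : B.Finite) :
    ∃ u : ℂ, Set.InjOn (fun x ↦ ⟪u, x⟫) V ∧ Set.InjOn (cross u) B := by
  obtain ⟨u, hu⟩ := exists_injOn_inner (hV.union (hB.image (Complex.I * ·)))
  refine ⟨u, hu.mono Set.subset_union_left, fun x hx y hy hxy ↦ ?_⟩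
  have hinner (z : ℂ) : ⟪u, Complex.I * z⟫ = -cross u z := by
    rw [real_inner_comm, inner_I_mul, cross_swap]
  refine mul_left_cancel₀ Complex.I_ne_zero (hu (.inr ⟨x, hx, rfl⟩) (.inr ⟨y, hy, rfl⟩) ?_)
  simp only [hinner, hxy]

lemma inner_sub_nonpos_of_mem_voronoiCell (hp : p ∈ P) (ha : a ∈ P) (hvp : v ∈ voronoiCell P p)
    (hva : v ∈ voronoiCell P a) (hx : x ∈ voronoiCell P p) : ⟪x - v, a - p⟫ ≤ 0 := by
  have hle := dist_le_dist_iff_inner.1 (hx a ha)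
  have heq := dist_eq_dist_iff_inner.1 (dist_eq_of_mem_voronoiCell hp ha hvp hva)
  rw [← sub_sub_sub_cancel_right x v p, inner_sub_left]
  linarith

lemma norm_sq_mul_inner (u v w : ℂ) :
    ‖u‖ ^ 2 * ⟪v, w⟫ = ⟪u, v⟫ * ⟪u, w⟫ + cross u v * cross u w := by
  rw [← real_inner_smul_left, norm_sq_smul_eq, inner_add_left, real_inner_smul_left,
    real_inner_smul_left, inner_I_mul]

lemma cross_sub_right (u v w : ℂ) : cross u (v - w) = cross u v - cross u w := by
  simp [cross]
  ring

lemma norm_sq_mul_cross (u v w : ℂ) :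
    ‖u‖ ^ 2 * cross v w = ⟪u, v⟫ * cross u w - cross u v * ⟪u, w⟫ := by
  simp [cross, Complex.sq_norm, Complex.normSq_apply]
  ring

/-- Some combination of `h` and `k` with positive weights is orthogonal to `u`. It makes obtuse or
right angles with both `d` and `e`, which lie on different sides of `u`, so it vanishes. Hence all
the angles are right. -/
lemma cross_eq_zero_of_inner_nonpos {d e h k : ℂ} (hk : ⟪u, k⟫ < 0) (hh : 0 < ⟪u, h⟫)
    (hd : cross u d < 0) (he : 0 < cross u e) (hhd : ⟪h, d⟫ ≤ 0) (hkd : ⟪k, d⟫ ≤ 0)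
    (hhe : ⟪h, e⟫ ≤ 0) (hke : ⟪k, e⟫ ≤ 0) : cross d e = 0 := by
  set t := cross u (-⟪u, k⟫ • h + ⟪u, h⟫ • k)
  have key (w : ℂ) : ‖u‖ ^ 2 * (-⟪u, k⟫ * ⟪h, w⟫ + ⟪u, h⟫ * ⟪k, w⟫) = t * cross u w := by
    have hortho : ⟪u, -⟪u, k⟫ • h + ⟪u, h⟫ • k⟫ = 0 := by
      rw [inner_add_right, real_inner_smul_right, real_inner_smul_right]
      ring
    rw [← real_inner_smul_left, ← real_inner_smul_left, ← inner_add_left, norm_sq_mul_inner,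
      hortho, zero_mul, zero_add]
  have hcombo {w : ℂ} (hhw : ⟪h, w⟫ ≤ 0) (hkw : ⟪k, w⟫ ≤ 0) : t * cross u w ≤ 0 := by
    rw [← key]
    exact mul_nonpos_of_nonneg_of_nonpos (by positivity) (add_nonpos
      (mul_nonpos_of_nonneg_of_nonpos (neg_nonneg.2 hk.le) hhw)
      (mul_nonpos_of_nonneg_of_nonpos hh.le hkw))
  have ht : t = 0 := le_antisymm (nonpos_of_mul_nonpos_left (hcombo hhe hke) he)
    (not_lt.1 fun ht ↦ (hcombo hhd hkd).not_gt (mul_pos_of_neg_of_neg ht hd))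
  have hu : 0 < ‖u‖ ^ 2 := by
    have : u ≠ 0 := by rintro rfl; simp at hh
    positivity
  have hright {w : ℂ} (hhw : ⟪h, w⟫ ≤ 0) (hkw : ⟪k, w⟫ ≤ 0) : ⟪h, w⟫ = 0 := by
    have hsum := key w
    rw [ht, zero_mul, mul_eq_zero, or_iff_right hu.ne'] at hsum
    nlinarith [mul_nonpos_of_nonneg_of_nonpos hh.le hkw]
  have hh2 : 0 < ‖h‖ ^ 2 := by
    have : h ≠ 0 := by rintro rfl; simp at hh
    positivity
  refine (mul_eq_zero.1 ?_).resolve_left hh2.ne'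
  rw [norm_sq_mul_cross, hright hhd hkd, hright hhe hke, zero_mul, mul_zero, sub_zero]

/-- Sweeping the plane in direction `u`, at a vertex `v` only the two outermost cells can both
start before `v` and end after it. -/
lemma isExtrOn_inner_of_cross_lt (hp : p ∈ P) (ha : a ∈ P) (hb : b ∈ P)
    (hvp : v ∈ voronoiCell P p) (hva : v ∈ voronoiCell P a) (hvb : v ∈ voronoiCell P b)
    (hap : cross u a < cross u p) (hpb : cross u p < cross u b) :
    IsExtrOn (fun x ↦ ⟪u, x⟫) (voronoiCell P p) v := by
  by_contra hextr
  simp only [IsExtrOn, IsExtrFilter, not_or, IsMinFilter, IsMaxFilter, eventually_principal]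
    at hextr
  push Not at hextr
  obtain ⟨⟨y, hy, hyv⟩, x, hx, hvx⟩ := hextr
  have hcross : cross (a - p) (b - p) = 0 := by
    refine cross_eq_zero_of_inner_nonpos (u := u) (h := x - v) (k := y - v) ?_ ?_ ?_ ?_
      (inner_sub_nonpos_of_mem_voronoiCell hp ha hvp hva hx)
      (inner_sub_nonpos_of_mem_voronoiCell hp ha hvp hva hy)
      (inner_sub_nonpos_of_mem_voronoiCell hp hb hvp hvb hx)
      (inner_sub_nonpos_of_mem_voronoiCell hp hb hvp hvb hy)
    · rwa [inner_sub_right, sub_neg]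
    · rwa [inner_sub_right, sub_pos]
    · rwa [cross_sub_right, sub_neg]
    · rwa [cross_sub_right, sub_pos]
  obtain rfl := eq_of_cross_eq_zero (ne_of_apply_ne (cross u) hap.ne)
    (ne_of_apply_ne (cross u) hpb.ne') (dist_eq_of_mem_voronoiCell hp ha hvp hva)
    (dist_eq_of_mem_voronoiCell hp hb hvp hvb) hcross
  exact hap.not_gt hpb

open Finset

open scoped Classical in
lemma card_le_card_filter_isExtrOn_add_two {B : Finset ℂ} (hB : ∀ p ∈ B, p ∈ P)
    (hv : ∀ p ∈ B, v ∈ voronoiCell P p) (hu : Set.InjOn (cross u) B) :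
    #B ≤ #{p ∈ B | IsExtrOn (fun x ↦ ⟪u, x⟫) (voronoiCell P p) v} + 2 := by
  obtain rfl | hne := B.eq_empty_or_nonempty
  · simp
  obtain ⟨a, ha, hmin⟩ := B.exists_min_image (cross u) hne
  obtain ⟨b, hb, hmax⟩ := B.exists_max_image (cross u) hne
  have hsub : ({p ∈ B | ¬ IsExtrOn (fun x ↦ ⟪u, x⟫) (voronoiCell P p) v} : Finset ℂ) ⊆ {a, b} := by
    intro p hp
    rw [mem_filter] at hp
    obtain ⟨hp, hextr⟩ := hp
    by_contra hab
    simp only [mem_insert, mem_singleton, not_or] at hab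
    exact hextr (isExtrOn_inner_of_cross_lt (hB p hp) (hB a ha) (hB b hb) (hv p hp) (hv a ha)
      (hv b hb) ((hmin p hp).lt_of_ne fun h ↦ hab.1 (hu hp ha h.symm))
      ((hmax p hp).lt_of_ne fun h ↦ hab.2 (hu hp hb h)))
  rw [← card_filter_add_card_filter_not (s := B)
    (fun p ↦ IsExtrOn (fun x ↦ ⟪u, x⟫) (voronoiCell P p) v)]
  exact Nat.add_le_add_left ((card_le_card hsub).trans card_le_two) _

open scoped Classical in
lemma card_filter_isExtrOn_le_two {α : Type*} {f : α → ℝ} {V : Finset α} (hf : Set.InjOn f V)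
    (S : Set α) : #{v ∈ V | v ∈ S ∧ IsExtrOn f S v} ≤ 2 := by
  have hmin : #{v ∈ V | v ∈ S ∧ IsMinOn f S v} ≤ 1 := card_le_one.2 <| by
    simp only [mem_filter]
    exact fun v hv w hw ↦ hf hv.1 hw.1 ((hv.2.2 hw.2.1).antisymm (hw.2.2 hv.2.1))
  have hmax : #{v ∈ V | v ∈ S ∧ IsMaxOn f S v} ≤ 1 := card_le_one.2 <| by
    simp only [mem_filter]
    exact fun v hv w hw ↦ hf hv.1 hw.1 ((hw.2.2 hv.2.1).antisymm (hv.2.2 hw.2.1))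
  simp only [IsExtrOn, IsExtrFilter, and_or_left, filter_or]
  exact (card_union_le _ _).trans (add_le_add hmin hmax)

open scoped Classical in
lemma IsLocallyFiniteCover.ncard_sides_le (hP : IsLocallyFiniteCover P R) {V : Finset ℂ}
    (hV : ∀ q ∈ sides P p, sideEnd P p q ∈ V) :
    (sides P p).ncard ≤ #{v ∈ V | v ∈ voronoiCell P p} := by
  rw [← Set.ncard_coe_finset]
  refine Set.ncard_le_ncard_of_injOn (sideEnd P p) (fun q hq ↦ ?_) (hP.sideEnd_injOn p)
  rw [coe_filter]
  exact ⟨hV q hq, (hP.isGreatest_sideMax hq.1).1⟩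

open scoped Classical in
lemma IsLocallyFiniteCover.three_le_card_of_sideEnd (hP : IsLocallyFiniteCover P R) {q : ℂ}
    (hp : p ∈ P) (hq : q ∈ neighbors P p) {B : Finset ℂ}
    (hB : ∀ r ∈ P, sideEnd P p q ∈ voronoiCell P r → r ∈ B) : 3 ≤ #B := by
  obtain ⟨r, hr, hrp, hrq, hvr⟩ := hP.exists_third_site_sideEnd hq
  have hvp := (hP.isGreatest_sideMax hq).1
  have hsub : {p, q, r} ⊆ B := by
    simp only [insert_subset_iff, singleton_subset_iff]
    exact ⟨hB p hp hvp, hB q hq.1 (bisectorPoint_mem_voronoiCell_right hvp), hB r hr hvr⟩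
  exact (card_eq_three.2 ⟨p, q, r, hq.2.1.symm, hrp.symm, hrq.symm, rfl⟩).ge.trans
    (card_le_card hsub)

open scoped Classical in
/-- The form of Euler's formula that is needed: up to boundary effects, the average number of sides
is at most six. Sweep the plane in a generic direction. Each cell starts at no more than one vertex
and ends at no more than one, whereas a vertex with `n ≥ 3` cells has at least `n - 2 ≥ n / 3` cells
starting or ending at it. -/
theorem IsLocallyFiniteCover.sum_ncard_sides_le (hP : IsLocallyFiniteCover P R) {A A' : Finset ℂ}
    (hA : A ⊆ A') (hA' : ∀ p ∈ A', p ∈ P)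
    (hAA' : ∀ p ∈ A, ∀ v ∈ voronoiCell P p, ∀ r ∈ P, v ∈ voronoiCell P r → r ∈ A') :
    ∑ p ∈ A, (sides P p).ncard ≤ 6 * #A' := by
  set V := A.biUnion fun p ↦ (hP.finite_sides p).toFinset.image (sideEnd P p)
  have hV {v : ℂ} : v ∈ V ↔ ∃ p ∈ A, ∃ q ∈ sides P p, sideEnd P p q = v := by simp [V]
  obtain ⟨u, huV, huA'⟩ := exists_injOn_inner_and_injOn_cross V.finite_toSet A'.finite_toSet
  let extremal (p v : ℂ) : Prop :=
    v ∈ voronoiCell P p ∧ IsExtrOn (fun x ↦ ⟪u, x⟫) (voronoiCell P p) v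
  have hvertex : ∀ v ∈ V, #{p ∈ A' | v ∈ voronoiCell P p} ≤ 3 * #{p ∈ A' | extremal p v} := by
    intro v hv
    have hthree : 3 ≤ #{p ∈ A' | v ∈ voronoiCell P p} := by
      obtain ⟨p, hp, q, hq, rfl⟩ := hV.1 hv
      exact hP.three_le_card_of_sideEnd (hA' p (hA hp)) hq.1 fun r hr hvr ↦
        mem_filter.2 ⟨hAA' p hp _ (hP.isGreatest_sideMax hq.1).1 r hr hvr, hvr⟩
    have htwo := card_le_card_filter_isExtrOn_add_two (B := {p ∈ A' | v ∈ voronoiCell P p}) (v := v)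
      (fun p hp ↦ hA' p (mem_filter.1 hp).1) (fun p hp ↦ (mem_filter.1 hp).2)
      (huA'.mono (filter_subset _ _))
    rw [filter_filter] at htwo
    change _ ≤ #{p ∈ A' | extremal p v} + 2 at htwo
    omega
  calc ∑ p ∈ A, (sides P p).ncard
      ≤ ∑ p ∈ A, #{v ∈ V | v ∈ voronoiCell P p} :=
        sum_le_sum fun p hp ↦ hP.ncard_sides_le fun q hq ↦ hV.2 ⟨p, hp, q, hq, rfl⟩
    _ ≤ ∑ p ∈ A', #{v ∈ V | v ∈ voronoiCell P p} := sum_le_sum_of_subset hA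
    _ = ∑ v ∈ V, #{p ∈ A' | v ∈ voronoiCell P p} :=
        sum_card_bipartiteAbove_eq_sum_card_bipartiteBelow _
    _ ≤ ∑ v ∈ V, 3 * #{p ∈ A' | extremal p v} := sum_le_sum hvertex
    _ = 3 * ∑ p ∈ A', #{v ∈ V | extremal p v} := by
        rw [← mul_sum]
        exact congrArg (3 * ·) (sum_card_bipartiteAbove_eq_sum_card_bipartiteBelow extremal).symm
    _ ≤ 3 * ∑ p ∈ A', 2 := by
        gcongr
        exact card_filter_isExtrOn_le_two huV (voronoiCell P p)
    _ = 6 * #A' := by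
        rw [sum_const, smul_eq_mul]
        ring

end Euler

/-! ### Constants -/

section Constants

/-- The value at `0` of the tangent at `π / 6` to the graph of `sin / 2`. -/
def tangentIntercept : ℝ := 1 / 4 - √3 * π / 24

/-- The weight, relative to area, of the chords of a disk in `cellDensity`. It is the largest for
which the bound `sector_area_le` holds when the sector contains a whole chord. -/
def chordWeight : ℝ := 1 - 4 * tangentIntercept / √3

/-- The integral of `cellDensity` over all directions. -/
def totalDensity : ℝ := chordWeight * √3 / 2 + √3 * π / 6

lemma one_lt_sqrt_three : 1 < √3 := Real.lt_sqrt_of_sq_lt (by norm_num)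

lemma tangentIntercept_pos : 0 < tangentIntercept := by
  have : √3 < 1.8 := (Real.sqrt_lt' (by norm_num)).2 (by norm_num)
  unfold tangentIntercept
  nlinarith [pi_lt_d2, pi_pos]

lemma chordWeight_mul_sqrt_three : chordWeight * √3 = √3 - 4 * tangentIntercept := by
  unfold chordWeight
  field_simp

lemma chordWeight_pos : 0 < chordWeight := by
  refine pos_of_mul_pos_left ?_ (sqrt_nonneg 3)
  rw [chordWeight_mul_sqrt_three, tangentIntercept]
  linarith [one_lt_sqrt_three, mul_pos (zero_lt_one.trans one_lt_sqrt_three) pi_pos]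

lemma chordWeight_lt_one : chordWeight < 1 := by
  have := tangentIntercept_pos
  exact sub_lt_self _ (by positivity)

lemma totalDensity_nonneg : 0 ≤ totalDensity := by
  have := chordWeight_pos
  unfold totalDensity
  positivity

lemma totalDensity_add : totalDensity + 6 * tangentIntercept = 1 + √3 / 2 := by
  rw [totalDensity, chordWeight_mul_sqrt_three, tangentIntercept]
  ring

end Constants

/-! ### Trigonometry -/

section Trigonometry

variable {s t x θ : ℝ}

lemma half_lt_cos_iff (hx : |x| ≤ π) : 1 / 2 < cos x ↔ |x| < π / 3 := by
  rw [← cos_pi_div_three, ← cos_abs x]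
  exact strictAntiOn_cos.lt_iff_gt ⟨by positivity, by linarith [pi_pos]⟩ ⟨abs_nonneg x, hx⟩

lemma sin_le_sin_add_cos_mul_sub (hx : 0 ≤ x) (hθ : θ ∈ Set.Icc 0 π) (hx' : x ≤ π) :
    sin x ≤ sin θ + cos θ * (x - θ) := by
  have hconcave := strictConcaveOn_sin_Icc.concaveOn
  obtain h | rfl | h := lt_trichotomy x θ
  · have := hconcave.le_slope_of_hasDerivAt ⟨hx, hx'⟩ hθ h (hasDerivAt_sin θ)
    rw [slope_def_field, le_div_iff₀ (sub_pos.2 h)] at this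
    linarith
  · simp
  · have := hconcave.slope_le_of_hasDerivAt hθ ⟨hx, hx'⟩ h (hasDerivAt_sin θ)
    rw [slope_def_field, div_le_iff₀ (sub_pos.2 h)] at this
    linarith

lemma sin_div_two_le (hx : 0 ≤ x) : sin x / 2 ≤ tangentIntercept + √3 / 4 * x := by
  have heq : sin (π / 6) + cos (π / 6) * (x - π / 6) =
      2 * (tangentIntercept + √3 / 4 * x) := by
    rw [sin_pi_div_six, cos_pi_div_six, tangentIntercept]
    ring
  obtain h | h := le_total x π
  · linarith [sin_le_sin_add_cos_mul_sub (θ := π / 6) hx ⟨by positivity, by linarith [pi_pos]⟩ h]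
  · have := mul_nonneg (sub_nonneg.2 one_lt_sqrt_three.le) hx
    linarith [sin_le_one x, tangentIntercept_pos, pi_gt_d2]

lemma cos_two_mul_pi_div_three : cos (2 * π / 3) = -1 / 2 := by
  rw [show 2 * π / 3 = π - π / 3 by ring, cos_pi_sub, cos_pi_div_three]
  ring

lemma sin_le_sqrt_three_div_two (hx : 2 * π / 3 ≤ x) (hx' : x ≤ 2 * π) : sin x ≤ √3 / 2 := by
  have hsin : sin (2 * π / 3) = √3 / 2 := by
    rw [show 2 * π / 3 = π - π / 3 by ring, sin_pi_sub, sin_pi_div_three]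
  obtain h | h := le_total x π
  · have := sin_le_sin_add_cos_mul_sub (θ := 2 * π / 3) (by linarith [pi_pos])
      ⟨by positivity, by linarith [pi_pos]⟩ h
    rw [cos_two_mul_pi_div_three, hsin] at this
    linarith
  · rw [← sin_sub_two_pi]
    exact (sin_nonpos_of_nonpos_of_neg_pi_le (by linarith) (by linarith)).trans (by positivity)

lemma integral_inv_cos_sq (h : ∀ x ∈ Set.uIcc s t, cos x ≠ 0) :
    ∫ x in s..t, (cos x ^ 2)⁻¹ = tan t - tan s := by
  refine intervalIntegral.integral_eq_sub_of_hasDerivAt (fun x hx ↦ ?_) ?_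
  · simpa using hasDerivAt_tan (h x hx)
  · exact ContinuousOn.intervalIntegrable
      (.inv₀ (by fun_prop) fun x hx ↦ pow_ne_zero 2 (h x hx))

end Trigonometry

/-! ### An angular density -/

section Density

variable {a a' s t x y z τ ρ ρ' : ℝ}

/-- The excess of the weighted area of the triangle over a chord of the unit disk at distance `1/2`
from the center above `√3 / 4` times its angle, as a density in the direction `x` measured from the
middle of the chord. -/
def chordExcess (x : ℝ) : ℝ := if 1 / 2 < cos x then chordWeight / (8 * cos x ^ 2) - √3 / 4 else 0

lemma chordExcess_of_lt (h : 1 / 2 < cos x) :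
    chordExcess x = chordWeight / (8 * cos x ^ 2) - √3 / 4 := if_pos h

lemma chordExcess_of_le (h : cos x ≤ 1 / 2) : chordExcess x = 0 := if_neg h.not_gt

lemma periodic_chordExcess : Function.Periodic chordExcess (2 * π) := fun x ↦ by
  simp only [chordExcess, cos_periodic x]

lemma neg_le_chordExcess (x : ℝ) : -(√3 / 4) ≤ chordExcess x := by
  have := chordWeight_pos
  obtain h | h := lt_or_ge (1 / 2) (cos x)
  · rw [chordExcess_of_lt h, neg_le_sub_iff_le_add, le_add_iff_nonneg_left]
    positivity
  · rw [chordExcess_of_le h]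
    linarith [sqrt_nonneg 3]

lemma chordExcess_le_half (x : ℝ) : chordExcess x ≤ 1 / 2 := by
  obtain h | h := lt_or_ge (1 / 2) (cos x)
  · have : chordWeight / (8 * cos x ^ 2) ≤ 1 / 2 := by
      rw [div_le_iff₀ (by positivity)]
      nlinarith [chordWeight_lt_one]
    rw [chordExcess_of_lt h]
    linarith [sqrt_nonneg 3]
  · rw [chordExcess_of_le h]
    norm_num

lemma intervalIntegrable_chordExcess (s t : ℝ) : IntervalIntegrable chordExcess volume s t := by
  have hmeas : Measurable chordExcess :=
    .ite (measurableSet_lt measurable_const measurable_cos) (by fun_prop) measurable_const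
  refine (intervalIntegrable_const (c := √3)).mono_fun hmeas.aestronglyMeasurable (.of_forall
    fun x ↦ ?_)
  simp only [norm_of_nonneg (sqrt_nonneg 3), norm_eq_abs, abs_le]
  have := one_lt_sqrt_three
  constructor
  · linarith [neg_le_chordExcess x]
  · linarith [chordExcess_le_half x]

lemma cos_ne_zero_of_abs_sub_le (hs : |s - τ| ≤ π / 3) (ht : |t - τ| ≤ π / 3) :
    ∀ x ∈ Set.uIcc (s - τ) (t - τ), cos x ≠ 0 := by
  intro x hx
  have h := Set.uIcc_subset_Icc (abs_le.1 hs) (abs_le.1 ht) hx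
  exact (cos_pos_of_mem_Ioo ⟨by linarith [h.1, pi_pos], by linarith [h.2, pi_pos]⟩).ne'

lemma integral_chordExcess :
    ∫ x in (-π)..π, chordExcess x = chordWeight * √3 / 4 - √3 * π / 6 := by
  have hsets : Set.EqOn chordExcess ((Set.Ioo (-(π / 3)) (π / 3)).indicator
      fun x ↦ chordWeight / 8 * (cos x ^ 2)⁻¹ - √3 / 4) (Set.Ioc (-π) π) := by
    intro x hx
    have hiff := half_lt_cos_iff (abs_le.2 ⟨hx.1.le, hx.2⟩)
    rw [abs_lt, ← Set.mem_Ioo] at hiff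
    by_cases hx' : x ∈ Set.Ioo (-(π / 3)) (π / 3)
    · rw [Set.indicator_of_mem hx', chordExcess_of_lt (hiff.2 hx')]
      field_simp
    · rw [Set.indicator_of_notMem hx', chordExcess_of_le (not_lt.1 (mt hiff.1 hx'))]
  have hcos : ∀ x ∈ Set.uIcc (-(π / 3)) (π / 3), cos x ≠ 0 := by
    have h : |π / 3| ≤ π / 3 := (abs_of_pos (by positivity)).le
    simpa using cos_ne_zero_of_abs_sub_le (s := -(π / 3)) (t := π / 3) (τ := 0)
      (by simpa using h) (by simpa using h)
  rw [intervalIntegral.integral_of_le (by linarith [pi_pos]),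
    setIntegral_congr_fun measurableSet_Ioc hsets, setIntegral_indicator measurableSet_Ioo,
    Set.inter_eq_right.2 (Set.Ioo_subset_Ioc_self.trans
      (Set.Ioc_subset_Ioc (by linarith [pi_pos]) (by linarith [pi_pos]))),
    ← integral_Ioc_eq_integral_Ioo,
    ← intervalIntegral.integral_of_le (by linarith [pi_pos]), intervalIntegral.integral_sub,
    intervalIntegral.integral_const_mul, integral_inv_cos_sq hcos, intervalIntegral.integral_const,
    tan_neg, tan_pi_div_three, smul_eq_mul]
  · ring
  · exact ((ContinuousOn.inv₀ (by fun_prop) fun x hx ↦ pow_ne_zero 2 (hcos x hx)).const_mul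
      _).intervalIntegrable
  · exact intervalIntegrable_const

/-- A density of directions, for a unit disk of which two disjoint segments beyond the chords at
distance `1/2` from the center, in the directions `a` and `a'`, are removed. It is chosen so that
`sector_area_le` bounds the areas of triangles in the remaining region. -/
def cellDensity (a a' θ : ℝ) : ℝ := √3 / 4 + chordExcess (θ - a) + chordExcess (θ - a')

lemma intervalIntegrable_cellDensity (a a' s t : ℝ) :
    IntervalIntegrable (cellDensity a a') volume s t := by
  have h (c : ℝ) := (intervalIntegrable_chordExcess (s - c) (t - c)).comp_sub_right c
  simp only [sub_add_cancel] at h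
  exact (intervalIntegrable_const.add (h a)).add (h a')

lemma periodic_cellDensity (a a' : ℝ) : Function.Periodic (cellDensity a a') (2 * π) := fun θ ↦ by
  simp only [cellDensity, add_sub_right_comm θ (2 * π), periodic_chordExcess _]

lemma integral_cellDensity (a a' : ℝ) : ∫ θ in (-π)..π, cellDensity a a' θ = totalDensity := by
  have hshift (c : ℝ) :
      ∫ θ in (-π)..π, chordExcess (θ - c) = chordWeight * √3 / 4 - √3 * π / 6 := by
    rw [intervalIntegral.integral_comp_sub_right, ← integral_chordExcess]
    convert periodic_chordExcess.intervalIntegral_add_eq (-π - c) (-π) using 2 <;> ring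
  have hint (c : ℝ) : IntervalIntegrable (fun θ ↦ chordExcess (θ - c)) volume (-π) π := by
    simpa using (intervalIntegrable_chordExcess (-π - c) (π - c)).comp_sub_right c
  simp only [cellDensity]
  rw [intervalIntegral.integral_add (intervalIntegrable_const.add (hint a)) (hint a'),
    intervalIntegral.integral_add intervalIntegrable_const (hint a), hshift, hshift,
    intervalIntegral.integral_const, smul_eq_mul, totalDensity]
  ring

lemma cos_sub_le_half (h : cos (a - a') ≤ -1 / 2) (hs : 1 / 2 ≤ cos (s - a)) :
    cos (s - a') ≤ 1 / 2 := by
  rw [← sub_sub_sub_cancel_left a' a s, cos_sub] at h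
  have := sin_sq_add_cos_sq (s - a)
  have := sin_sq_add_cos_sq (s - a')
  by_contra!
  nlinarith [sq_nonneg (sin (s - a) + sin (s - a'))]

lemma cellDensity_of_lt (h : cos (a - a') ≤ -1 / 2) (hs : 1 / 2 < cos (s - a)) :
    cellDensity a a' s = chordWeight / (8 * cos (s - a) ^ 2) := by
  rw [cellDensity, chordExcess_of_lt hs, chordExcess_of_le (cos_sub_le_half h hs.le)]
  ring

lemma cellDensity_comm (a a' : ℝ) : cellDensity a a' = cellDensity a' a :=
  funext fun _ ↦ add_right_comm ..

lemma cellDensity_nonneg (h : cos (a - a') ≤ -1 / 2) (s : ℝ) : 0 ≤ cellDensity a a' s := by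
  have hmin (c : ℝ) := neg_le_chordExcess (s - c)
  obtain hs | hs := lt_or_ge (1 / 2) (cos (s - a))
  · have := chordWeight_pos
    rw [cellDensity_of_lt h hs]
    positivity
  · rw [cellDensity, chordExcess_of_le hs]
    linarith [hmin a']

/-- `τ` is one of the angles `a` and `a'`, up to multiples of `2 * π`. -/
def IsChordDirection (a a' τ : ℝ) : Prop := (τ : Real.Angle) = a ∨ (τ : Real.Angle) = a'

/-- The rays in the directions of the arcs of a disk with two segments removed, as opposed to the
rays in the directions of its chords. -/
def IsArcDirection (a a' s : ℝ) : Prop := cos (s - a) ≤ 1 / 2 ∧ cos (s - a') ≤ 1 / 2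

lemma cos_sub_eq_of_coe_eq {b : ℝ} (h : (τ : Real.Angle) = b) (s : ℝ) :
    cos (s - τ) = cos (s - b) := by
  rw [← Real.Angle.cos_coe, Real.Angle.coe_sub, h, ← Real.Angle.coe_sub, Real.Angle.cos_coe]

lemma exists_coe_eq_of_half_lt_cos {b : ℝ} (h : 1 / 2 < cos (s - b)) :
    ∃ τ : ℝ, (τ : Real.Angle) = b ∧ |s - τ| < π / 3 := by
  refine ⟨s - ((s - b : ℝ) : Real.Angle).toReal, by simp, ?_⟩
  rw [sub_sub_cancel, ← half_lt_cos_iff (Real.Angle.abs_toReal_le_pi _)]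
  simpa only [Real.Angle.cos_toReal, Real.Angle.cos_coe]

lemma isArcDirection_or_exists_isChordDirection (a a' s : ℝ) :
    IsArcDirection a a' s ∨ ∃ τ, IsChordDirection a a' τ ∧ |s - τ| < π / 3 := by
  rw [or_iff_not_imp_left, IsArcDirection, not_and_or, not_le, not_le]
  rintro (h | h)
  · obtain ⟨τ, hτ, hs⟩ := exists_coe_eq_of_half_lt_cos h
    exact ⟨τ, .inl hτ, hs⟩
  · obtain ⟨τ, hτ, hs⟩ := exists_coe_eq_of_half_lt_cos h
    exact ⟨τ, .inr hτ, hs⟩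

lemma IsArcDirection.cos_sub_le_half (hs : IsArcDirection a a' s) (hτ : IsChordDirection a a' τ) :
    cos (s - τ) ≤ 1 / 2 := by
  obtain h | h := hτ
  · exact (cos_sub_eq_of_coe_eq h s).trans_le hs.1
  · exact (cos_sub_eq_of_coe_eq h s).trans_le hs.2

lemma IsArcDirection.le_abs_sub (hs : IsArcDirection a a' s) (hτ : IsChordDirection a a' τ) :
    π / 3 ≤ |s - τ| := by
  by_contra! h
  exact (hs.cos_sub_le_half hτ).not_gt ((half_lt_cos_iff (by linarith [pi_pos])).2 h)

lemma IsArcDirection.cellDensity_eq (hs : IsArcDirection a a' s) : cellDensity a a' s = √3 / 4 := by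
  rw [cellDensity, chordExcess_of_le hs.1, chordExcess_of_le hs.2, add_zero, add_zero]

lemma isArcDirection_of_cos_sub_eq (h : cos (a - a') ≤ -1 / 2) (hτ : IsChordDirection a a' τ)
    (hs : cos (s - τ) = 1 / 2) : IsArcDirection a a' s := by
  obtain hτ | hτ := hτ
  · rw [cos_sub_eq_of_coe_eq hτ] at hs
    exact ⟨hs.le, cos_sub_le_half h hs.ge⟩
  · rw [cos_sub_eq_of_coe_eq hτ] at hs
    rw [← cos_neg, neg_sub] at h
    exact ⟨cos_sub_le_half h hs.ge, hs.le⟩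

lemma isArcDirection_sub_pi_div_three (h : cos (a - a') ≤ -1 / 2)
    (hτ : IsChordDirection a a' τ) : IsArcDirection a a' (τ - π / 3) :=
  isArcDirection_of_cos_sub_eq h hτ (by rw [sub_sub_cancel_left, cos_neg, cos_pi_div_three])

lemma isArcDirection_add_pi_div_three (h : cos (a - a') ≤ -1 / 2)
    (hτ : IsChordDirection a a' τ) : IsArcDirection a a' (τ + π / 3) :=
  isArcDirection_of_cos_sub_eq h hτ (by rw [add_sub_cancel_left, cos_pi_div_three])

lemma IsChordDirection.cellDensity_eq (h : cos (a - a') ≤ -1 / 2)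
    (hτ : IsChordDirection a a' τ) (hs : |s - τ| < π / 3) :
    cellDensity a a' s = chordWeight / (8 * cos (s - τ) ^ 2) := by
  have hcos := (half_lt_cos_iff (by linarith [pi_pos])).2 hs
  obtain hτ | hτ := hτ
  · rw [cos_sub_eq_of_coe_eq hτ] at hcos ⊢
    exact cellDensity_of_lt h hcos
  · rw [cos_sub_eq_of_coe_eq hτ] at hcos ⊢
    rw [← cos_neg, neg_sub] at h
    rw [cellDensity_comm, cellDensity_of_lt h hcos]

lemma IsChordDirection.integral_cellDensity (h : cos (a - a') ≤ -1 / 2)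
    (hτ : IsChordDirection a a' τ) (hs : |s - τ| ≤ π / 3) (ht : |t - τ| ≤ π / 3) :
    ∫ θ in s..t, cellDensity a a' θ = chordWeight / 8 * (tan (t - τ) - tan (s - τ)) := by
  have hIoo : Set.uIoo s t ⊆ Set.Ioo (τ - π / 3) (τ + π / 3) := by
    rw [abs_sub_le_iff] at hs ht
    exact Set.Ioo_subset_Ioo (le_inf (by linarith) (by linarith))
      (sup_le (by linarith) (by linarith))
  have hcongr : ∫ θ in s..t, cellDensity a a' θ =
      ∫ θ in s..t, chordWeight / 8 * (cos (θ - τ) ^ 2)⁻¹ := by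
    refine intervalIntegral.integral_congr_uIoo fun θ hθ ↦ ?_
    have := hIoo hθ
    rw [hτ.cellDensity_eq h (abs_sub_lt_iff.2 ⟨by linarith [this.2], by linarith [this.1]⟩)]
    field_simp
  rw [hcongr, intervalIntegral.integral_const_mul,
    intervalIntegral.integral_comp_sub_right (fun θ ↦ (cos θ ^ 2)⁻¹),
    integral_inv_cos_sq (cos_ne_zero_of_abs_sub_le hs ht)]

lemma integral_cellDensity_of_isArcDirection (hst : s ≤ t)
    (h : ∀ x ∈ Set.Ioo s t, IsArcDirection a a' x) :
    ∫ θ in s..t, cellDensity a a' θ = √3 / 4 * (t - s) := by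
  rw [intervalIntegral.integral_congr_Ioo_of_le hst fun x hx ↦ (h x hx).cellDensity_eq,
    intervalIntegral.integral_const, smul_eq_mul, mul_comm]

lemma abs_tan_le (hx : |x| ≤ π / 3) : |tan x| ≤ √3 := by
  rw [← tan_pi_div_three, abs_le, ← tan_neg]
  rw [abs_le] at hx
  have hπ := pi_pos
  have hmono := strictMonoOn_tan.monotoneOn
  exact ⟨hmono ⟨by linarith, by linarith⟩ ⟨by linarith, by linarith⟩ hx.1,
    hmono ⟨by linarith, by linarith⟩ ⟨by linarith, by linarith⟩ hx.2⟩

/-- With the coefficient `(tan x + √3) / (2 * √3)`, the point of the chord in direction `x` is a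
convex combination of the two endpoints of the chord. -/
lemma sin_sub_div_two_cos (hx : cos x ≠ 0) :
    sin (x - z) / (2 * cos x) = (1 - (tan x + √3) / (2 * √3)) * sin (-(π / 3) - z) +
      (tan x + √3) / (2 * √3) * sin (π / 3 - z) := by
  rw [tan_eq_sin_div_cos, sin_sub, sin_sub, sin_sub, cos_neg, sin_neg, cos_pi_div_three,
    sin_pi_div_three]
  field_simp
  ring

lemma IsChordDirection.exists_interpolation (h : cos (a - a') ≤ -1 / 2)
    (hτ : IsChordDirection a a' τ) (hy : |y - τ| ≤ π / 3) :
    ∃ f ∈ Set.Icc (0 : ℝ) 1,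
      (∀ z, sin (y - z) / (2 * cos (y - τ)) =
        (1 - f) * sin (τ - π / 3 - z) + f * sin (τ + π / 3 - z)) ∧
      ∀ c, ∫ θ in c..y, cellDensity a a' θ =
        (1 - f) * (∫ θ in c..τ - π / 3, cellDensity a a' θ) +
          f * ∫ θ in c..τ + π / 3, cellDensity a a' θ := by
  have hcos : cos (y - τ) ≠ 0 := cos_ne_zero_of_abs_sub_le hy hy _ Set.left_mem_uIcc
  have htan := abs_le.1 (abs_tan_le hy)
  refine ⟨(tan (y - τ) + √3) / (2 * √3), ⟨div_nonneg (by linarith) (by positivity),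
    (div_le_one (by positivity)).2 (by linarith)⟩, fun z ↦ ?_, fun c ↦ ?_⟩
  · have := sin_sub_div_two_cos (z := z - τ) hcos
    rwa [sub_sub_sub_cancel_right, show -(π / 3) - (z - τ) = τ - π / 3 - z by ring,
      show π / 3 - (z - τ) = τ + π / 3 - z by ring] at this
  · have hπ : |π / 3| = π / 3 := abs_of_pos (by positivity)
    have hsplit (x : ℝ) (hx : |x - τ| ≤ π / 3) : ∫ θ in c..x, cellDensity a a' θ =
        (∫ θ in c..τ - π / 3, cellDensity a a' θ) + chordWeight / 8 * (tan (x - τ) + √3) := by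
      rw [← intervalIntegral.integral_add_adjacent_intervals
        (intervalIntegrable_cellDensity a a' c (τ - π / 3))
        (intervalIntegrable_cellDensity a a' (τ - π / 3) x),
        hτ.integral_cellDensity h (by simp [hπ]) hx, sub_sub_cancel_left, tan_neg,
        tan_pi_div_three, sub_neg_eq_add]
    rw [hsplit y hy, hsplit (τ + π / 3) (by simp [hπ]), add_sub_cancel_left,
      tan_pi_div_three]
    field_simp
    ring

lemma IsArcDirection.le_sub_of_le (hs : IsArcDirection a a' s) (hτ : IsChordDirection a a' τ)
    (hx : |x - τ| < π / 3) (hsx : s ≤ x) : s ≤ τ - π / 3 := by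
  have := (abs_lt.1 hx).2
  obtain h | h := le_abs.1 (hs.le_abs_sub hτ) <;> linarith

lemma IsArcDirection.add_le_of_le (ht : IsArcDirection a a' t) (hτ : IsChordDirection a a' τ)
    (hx : |x - τ| < π / 3) (hxt : x ≤ t) : τ + π / 3 ≤ t := by
  have := (abs_lt.1 hx).1
  obtain h | h := le_abs.1 (ht.le_abs_sub hτ) <;> linarith

lemma integral_cellDensity_nonneg (h : cos (a - a') ≤ -1 / 2) (hst : s ≤ t) :
    0 ≤ ∫ θ in s..t, cellDensity a a' θ :=
  intervalIntegral.integral_nonneg_of_forall hst (cellDensity_nonneg h)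

lemma IsChordDirection.integral_cellDensity_chord (h : cos (a - a') ≤ -1 / 2)
    (hτ : IsChordDirection a a' τ) :
    ∫ θ in τ - π / 3..τ + π / 3, cellDensity a a' θ = √3 / 4 - tangentIntercept := by
  have hπ : |π / 3| = π / 3 := abs_of_pos (by positivity)
  rw [hτ.integral_cellDensity h (by simp [hπ]) (by simp [hπ]), sub_sub_cancel_left,
    add_sub_cancel_left, tan_neg, tan_pi_div_three]
  linarith [chordWeight_mul_sqrt_three]

/-- If all directions between two arc directions are arc directions, this is the tangent bound for
the sine. Otherwise there is a whole chord in between, which contributes enough by itself. -/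
lemma sin_sub_div_two_le (h : cos (a - a') ≤ -1 / 2) (hs : IsArcDirection a a' s)
    (ht : IsArcDirection a a' t) (hst : s ≤ t) (hts : t ≤ s + 2 * π) :
    sin (t - s) / 2 ≤ tangentIntercept + ∫ θ in s..t, cellDensity a a' θ := by
  by_cases hall : ∀ x ∈ Set.Ioo s t, IsArcDirection a a' x
  · rw [integral_cellDensity_of_isArcDirection hst hall]
    exact sin_div_two_le (sub_nonneg.2 hst)
  · push Not at hall
    obtain ⟨x, hx, hxarc⟩ := hall
    obtain ⟨τ, hτ, hxτ⟩ := (isArcDirection_or_exists_isChordDirection a a' x).resolve_left hxarc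
    have hsτ := hs.le_sub_of_le hτ hxτ hx.1.le
    have hτt := ht.add_le_of_le hτ hxτ hx.2.le
    have hmono := intervalIntegral.integral_mono_interval hsτ (by linarith [pi_pos]) hτt
      (.of_forall (cellDensity_nonneg h)) (intervalIntegrable_cellDensity a a' s t)
    rw [hτ.integral_cellDensity_chord h] at hmono
    linarith [sin_le_sqrt_three_div_two (x := t - s) (by linarith) (by linarith)]

/-- The unit disk without the segments beyond the chords at distance `1 / 2` from the center in the
directions `a` and `a'`. -/
def truncatedDisk (a a' : ℝ) : Set ℂ :=
  {z | ‖z‖ ≤ 1 ∧ ⟪Complex.exp (a * Complex.I), z⟫ ≤ 1 / 2 ∧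
    ⟪Complex.exp (a' * Complex.I), z⟫ ≤ 1 / 2}

lemma le_one_of_mem_truncatedDisk (hz : ρ * Complex.exp (t * Complex.I) ∈ truncatedDisk a a') :
    ρ ≤ 1 := by
  have := hz.1
  rw [norm_mul, Complex.norm_exp_ofReal_mul_I, mul_one, Complex.norm_real] at this
  exact (le_abs_self ρ).trans this

lemma mul_cos_le_of_mem_truncatedDisk
    (hz : ρ * Complex.exp (t * Complex.I) ∈ truncatedDisk a a') (hτ : IsChordDirection a a' τ) :
    ρ * cos (t - τ) ≤ 1 / 2 := by
  have hinner (b : ℝ) :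
      ⟪Complex.exp (b * Complex.I), ρ * Complex.exp (t * Complex.I)⟫ = ρ * cos (t - b) := by
    simp [Complex.exp_ofReal_mul_I_re, Complex.exp_ofReal_mul_I_im, cos_sub]
    ring
  obtain hτ | hτ := hτ
  · rw [cos_sub_eq_of_coe_eq hτ, ← hinner]
    exact hz.2.1
  · rw [cos_sub_eq_of_coe_eq hτ, ← hinner]
    exact hz.2.2

lemma mul_le_div_two_mul_cos (hs : |t - τ| < π / 3) (hρ : ρ * cos (t - τ) ≤ 1 / 2) (hx : 0 ≤ x) :
    ρ * x ≤ x / (2 * cos (t - τ)) := by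
  have hcos := (half_lt_cos_iff (by linarith [pi_pos])).2 hs
  rw [le_div_iff₀ (by linarith)]
  linarith [mul_le_mul_of_nonneg_right hρ hx]

lemma mul_sin_sub_div_two_le (h : cos (a - a') ≤ -1 / 2) (hs : IsArcDirection a a' s)
    (hρ : 0 ≤ ρ) (ht : ρ * Complex.exp (t * Complex.I) ∈ truncatedDisk a a') (hst : s ≤ t)
    (hts : t ≤ s + 2 * π) :
    ρ * sin (t - s) / 2 ≤ tangentIntercept + ∫ θ in s..t, cellDensity a a' θ := by
  obtain hsin | hsin := le_or_gt (sin (t - s)) 0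
  · linarith [mul_nonpos_of_nonneg_of_nonpos hρ hsin, tangentIntercept_pos,
      integral_cellDensity_nonneg h hst]
  obtain harc | ⟨τ, hτ, htτ⟩ := isArcDirection_or_exists_isChordDirection a a' t
  · linarith [mul_le_of_le_one_left hsin.le (le_one_of_mem_truncatedDisk ht),
      sin_sub_div_two_le h hs harc hst hts]
  have hts' : t < s + π := by
    by_contra! hle
    refine hsin.not_ge ?_
    rw [← sin_sub_two_pi]
    exact sin_nonpos_of_nonpos_of_neg_pi_le (by linarith) (by linarith)
  have hsτ := hs.le_sub_of_le hτ htτ hst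
  have hτt := abs_lt.1 htτ
  obtain ⟨f, hf, hfsin, hfint⟩ := hτ.exists_interpolation h htτ.le
  have hleft := sin_sub_div_two_le h hs (isArcDirection_sub_pi_div_three h hτ) hsτ (by linarith)
  have hright := sin_sub_div_two_le h hs (isArcDirection_add_pi_div_three h hτ) (by linarith)
    (by linarith)
  have hle := mul_le_div_two_mul_cos htτ (mul_cos_le_of_mem_truncatedDisk ht hτ) hsin.le
  rw [hfsin] at hle
  rw [hfint]
  linarith [mul_le_mul_of_nonneg_left hleft (sub_nonneg.2 hf.2),
    mul_le_mul_of_nonneg_left hright hf.1]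

lemma tan_sub_tan (hs : cos s ≠ 0) (ht : cos t ≠ 0) :
    tan t - tan s = sin (t - s) / (cos s * cos t) := by
  rw [tan_eq_sin_div_cos, tan_eq_sin_div_cos, sin_sub]
  field_simp

lemma mul_mul_sin_sub_div_two_le_of_abs_sub_lt (h : cos (a - a') ≤ -1 / 2) (hρ' : 0 ≤ ρ')
    (hs : ρ * Complex.exp (s * Complex.I) ∈ truncatedDisk a a')
    (ht : ρ' * Complex.exp (t * Complex.I) ∈ truncatedDisk a a') (hst : s ≤ t)
    (hτ : IsChordDirection a a' τ) (hsτ : |s - τ| < π / 3) (htτ : |t - τ| < π / 3) :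
    ρ * ρ' * sin (t - s) / 2 ≤ tangentIntercept + ∫ θ in s..t, cellDensity a a' θ := by
  have hcoss := (half_lt_cos_iff (by linarith [pi_pos])).2 hsτ
  have hcost := (half_lt_cos_iff (by linarith [pi_pos])).2 htτ
  have htans := abs_le.1 (abs_tan_le hsτ.le)
  have htant := abs_le.1 (abs_tan_le htτ.le)
  have hsin : 0 ≤ sin (t - s) := sin_nonneg_of_nonneg_of_le_pi (sub_nonneg.2 hst)
    (by linarith [(abs_lt.1 hsτ).1, (abs_lt.1 htτ).2, pi_pos])
  have htan := tan_sub_tan (s := s - τ) (t := t - τ) (by linarith) (by linarith)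
  rw [sub_sub_sub_cancel_right] at htan
  have hρρ' : ρ * cos (s - τ) * (ρ' * cos (t - τ)) ≤ 1 / 2 * (1 / 2) :=
    mul_le_mul (mul_cos_le_of_mem_truncatedDisk hs hτ) (mul_cos_le_of_mem_truncatedDisk ht hτ)
      (by positivity) (by positivity)
  have hle : ρ * ρ' * sin (t - s) ≤ (tan (t - τ) - tan (s - τ)) / 4 := by
    rw [htan, div_div, le_div_iff₀ (by positivity)]
    linarith [mul_le_mul_of_nonneg_right hρρ' hsin]
  rw [hτ.integral_cellDensity h hsτ.le htτ.le]
  linarith [chordWeight_mul_sqrt_three, mul_le_mul_of_nonneg_left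
    (show tan (t - τ) - tan (s - τ) ≤ 2 * √3 by linarith) (sub_nonneg.2 chordWeight_lt_one.le)]

/-- A chord is treated by interpolation between its endpoints, where both sides are affine. -/
lemma mul_mul_sin_sub_div_two_le (h : cos (a - a') ≤ -1 / 2) (hρ' : 0 ≤ ρ')
    (hs : ρ * Complex.exp (s * Complex.I) ∈ truncatedDisk a a')
    (ht : ρ' * Complex.exp (t * Complex.I) ∈ truncatedDisk a a') (hst : s ≤ t)
    (hts : t ≤ s + π) :
    ρ * ρ' * sin (t - s) / 2 ≤ tangentIntercept + ∫ θ in s..t, cellDensity a a' θ := by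
  have hsin : 0 ≤ ρ' * sin (t - s) :=
    mul_nonneg hρ' (sin_nonneg_of_nonneg_of_le_pi (sub_nonneg.2 hst) (by linarith))
  rw [mul_assoc]
  obtain harc | ⟨τ, hτ, hsτ⟩ := isArcDirection_or_exists_isChordDirection a a' s
  · linarith [mul_le_of_le_one_left hsin (le_one_of_mem_truncatedDisk hs),
      mul_sin_sub_div_two_le h harc hρ' ht hst (by linarith)]
  have hτs := abs_lt.1 hsτ
  obtain htτ | htτ := lt_or_ge t (τ + π / 3)
  · rw [← mul_assoc]
    exact mul_mul_sin_sub_div_two_le_of_abs_sub_lt h hρ' hs ht hst hτ hsτ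
      (abs_lt.2 ⟨by linarith, by linarith⟩)
  obtain ⟨f, hf, hfsin, hfint⟩ := hτ.exists_interpolation h hsτ.le
  have hleft := mul_sin_sub_div_two_le h (isArcDirection_sub_pi_div_three h hτ) hρ' ht
    (by linarith) (by linarith)
  have hright := mul_sin_sub_div_two_le h (isArcDirection_add_pi_div_three h hτ) hρ' ht htτ
    (by linarith)
  have hle := mul_le_div_two_mul_cos hsτ (mul_cos_le_of_mem_truncatedDisk hs hτ) hsin
  have hfsin := hfsin t
  have hfint := hfint t
  simp only [← neg_sub t, sin_neg] at hfsin
  simp only [intervalIntegral.integral_symm _ t] at hfint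
  rw [mul_div_assoc] at hle
  rw [← neg_neg (sin (t - s)), neg_div, hfsin] at hle
  linarith [mul_le_mul_of_nonneg_left hleft (sub_nonneg.2 hf.2),
    mul_le_mul_of_nonneg_left hright hf.1]

/-! ### The area of a cell in a truncated disk -/

lemma cross_mul_exp (ρ ρ' s t : ℝ) :
    cross (ρ * Complex.exp (s * Complex.I)) (ρ' * Complex.exp (t * Complex.I)) =
      ρ * ρ' * sin (t - s) := by
  simp only [cross, Complex.re_ofReal_mul, Complex.im_ofReal_mul, Complex.exp_ofReal_mul_I_re,
    Complex.exp_ofReal_mul_I_im, sin_sub]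
  ring

lemma exists_eq_mul_exp_of_cross_pos {u v : ℂ} (h : 0 < cross u v) :
    ∃ s t : ℝ, s < t ∧ t < s + π ∧ u = ‖u‖ * Complex.exp (s * Complex.I) ∧
      v = ‖v‖ * Complex.exp (t * Complex.I) := by
  have hu : u ≠ 0 := by
    rintro rfl
    simp [cross] at h
  have him : 0 < (v / u).im := by
    rw [Complex.div_im, ← sub_div]
    exact div_pos (by linarith [h, show cross u v = u.re * v.im - u.im * v.re from rfl])
      (Complex.normSq_pos.2 hu)
  have harg : 0 < (v / u).arg ∧ (v / u).arg < π :=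
    ⟨(Complex.arg_nonneg_iff.2 him.le).lt_of_ne'
        fun h0 ↦ him.ne' (Complex.arg_eq_zero_iff.1 h0).2,
      (Complex.arg_le_pi _).lt_of_ne fun hπ ↦ him.ne' (Complex.arg_eq_pi_iff.1 hπ).2⟩
  refine ⟨u.arg, u.arg + (v / u).arg, by linarith, by linarith,
    (Complex.norm_mul_exp_arg_mul_I u).symm, ?_⟩
  calc
    v = u * (v / u) := by field_simp
    _ = ‖u‖ * Complex.exp (u.arg * Complex.I) *
        (‖v / u‖ * Complex.exp ((v / u).arg * Complex.I)) := by
      rw [Complex.norm_mul_exp_arg_mul_I, Complex.norm_mul_exp_arg_mul_I]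
    _ = ‖v‖ * Complex.exp ((u.arg + (v / u).arg : ℝ) * Complex.I) := by
      have := Complex.ofReal_ne_zero.2 (norm_ne_zero_iff.2 hu)
      rw [norm_div, Complex.ofReal_div, Complex.ofReal_add, add_mul, Complex.exp_add]
      field_simp

/-- The polar angles in `(-π, π]` of the points of a set, for integration over directions. -/
def directions (S : Set ℂ) : Set ℝ := Set.Ioc (-π) π ∩ {θ | Complex.exp (θ * Complex.I) ∈ S}

lemma continuous_exp_mul_I : Continuous fun θ : ℝ ↦ Complex.exp (θ * Complex.I) := by fun_prop

lemma isOpen_openCone (u v : ℂ) : IsOpen (openCone u v) := by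
  have hu : IsOpen {z | 0 < cross u z} := isOpen_lt (by fun_prop) (by unfold cross; fun_prop)
  have hv : IsOpen {z | 0 < cross z v} := isOpen_lt (by fun_prop) (by unfold cross; fun_prop)
  exact hu.inter hv

lemma measurableSet_directions {S : Set ℂ} (hS : MeasurableSet S) :
    MeasurableSet (directions S) :=
  measurableSet_Ioc.inter (continuous_exp_mul_I.measurable hS)

/-- The directions are rotated by a period to an interval that contains `(s, t)`. -/
lemma integral_le_setIntegral_directions {f : ℝ → ℝ} {S : Set ℂ} (hS : MeasurableSet S)
    (hper : Function.Periodic f (2 * π)) (hnonneg : ∀ θ, 0 ≤ f θ)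
    (hint : ∀ s t, IntervalIntegrable f volume s t) (hst : s ≤ t) (hts : t ≤ s + 2 * π)
    (hmem : ∀ θ ∈ Set.Ioo s t, Complex.exp (θ * Complex.I) ∈ S) :
    ∫ θ in s..t, f θ ≤ ∫ θ in directions S, f θ := by
  set D : Set ℝ := {θ | Complex.exp (θ * Complex.I) ∈ S}
  have hD : MeasurableSet D := continuous_exp_mul_I.measurable hS
  have hperD : Function.Periodic (D.indicator f) (2 * π) := fun θ ↦ by
    have hexp : Complex.exp ((θ + 2 * π : ℝ) * Complex.I) = Complex.exp (θ * Complex.I) := by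
      push_cast
      rw [add_mul, Complex.exp_periodic]
    classical simp only [Set.indicator_apply, D, Set.mem_ofPred_eq, hexp, hper θ]
  have hintD : IntervalIntegrable (D.indicator f) volume s (s + 2 * π) := by
    rw [intervalIntegrable_iff]
    exact (intervalIntegrable_iff.1 (hint s (s + 2 * π))).indicator hD
  calc
    ∫ θ in s..t, f θ = ∫ θ in s..t, D.indicator f θ :=
      intervalIntegral.integral_congr_Ioo_of_le hst fun θ hθ ↦
        (Set.indicator_of_mem (s := D) (hmem θ hθ) f).symm
    _ ≤ ∫ θ in s..s + 2 * π, D.indicator f θ :=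
      intervalIntegral.integral_mono_interval le_rfl hst hts
        (.of_forall <| Set.indicator_nonneg fun θ _ ↦ hnonneg θ) hintD
    _ = ∫ θ in (-π)..-π + 2 * π, D.indicator f θ := hperD.intervalIntegral_add_eq s (-π)
    _ = ∫ θ in directions S, f θ := by
      rw [neg_add_eq_sub, two_mul, add_sub_cancel_right,
        intervalIntegral.integral_of_le (by linarith [pi_pos]), setIntegral_indicator hD]
      rfl

theorem sector_area_le (h : cos (a - a') ≤ -1 / 2) {u v : ℂ} (hu : u ∈ truncatedDisk a a')
    (hv : v ∈ truncatedDisk a a') (huv : 0 < cross u v) :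
    cross u v / 2 ≤ tangentIntercept + ∫ θ in directions (openCone u v), cellDensity a a' θ := by
  obtain ⟨s, t, hst, hts, hus, hvt⟩ := exists_eq_mul_exp_of_cross_pos huv
  have hcross : cross u v = ‖u‖ * ‖v‖ * sin (t - s) := by
    rw [← cross_mul_exp, ← hus, ← hvt]
  have hsin (θ θ' : ℝ) (h : θ < θ') (h' : θ' < θ + π) : 0 < sin (θ' - θ) :=
    sin_pos_of_pos_of_lt_pi (sub_pos.2 h) (by linarith)
  have hpos : 0 < ‖u‖ ∧ 0 < ‖v‖ := by
    simp only [norm_pos_iff]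
    constructor <;> rintro rfl <;> simp [cross] at huv
  have hmem (θ : ℝ) (hθ : θ ∈ Set.Ioo s t) : Complex.exp (θ * Complex.I) ∈ openCone u v := by
    rw [← one_mul (Complex.exp _), ← Complex.ofReal_one, hus, hvt]
    constructor
    · rw [cross_mul_exp, mul_one]
      exact mul_pos hpos.1 (hsin s θ hθ.1 (by linarith [hθ.2]))
    · rw [cross_mul_exp, one_mul]
      exact mul_pos hpos.2 (hsin θ t hθ.2 (by linarith [hθ.1]))
  have hle := integral_le_setIntegral_directions (isOpen_openCone u v).measurableSet
    (periodic_cellDensity a a') (cellDensity_nonneg h) (intervalIntegrable_cellDensity a a') hst.le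
    (by linarith [pi_pos]) hmem
  rw [hus] at hu
  rw [hvt] at hv
  linarith [mul_mul_sin_sub_div_two_le h (norm_nonneg v) hu hv hst.le hts.le]

lemma sum_setIntegral_directions_le (h : cos (a - a') ≤ -1 / 2) {ι : Type*} {S : ι → Set ℂ}
    (F : Finset ι) (hS : ∀ i ∈ F, MeasurableSet (S i))
    (hdisj : (F : Set ι).PairwiseDisjoint S) :
    ∑ i ∈ F, ∫ θ in directions (S i), cellDensity a a' θ ≤ totalDensity := by
  have hint : IntegrableOn (cellDensity a a') (Set.Ioc (-π) π) :=
    (intervalIntegrable_iff_integrableOn_Ioc_of_le (by linarith [pi_pos])).1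
      (intervalIntegrable_cellDensity a a' (-π) π)
  rw [← integral_biUnion_finset F (fun i hi ↦ measurableSet_directions (hS i hi))
      (fun i hi j hj hij ↦ (Disjoint.preimage _ (hdisj hi hj hij)).mono
        Set.inter_subset_right Set.inter_subset_right)
      fun i _ ↦ hint.mono_set Set.inter_subset_left,
    ← integral_cellDensity a a', intervalIntegral.integral_of_le (by linarith [pi_pos])]
  exact setIntegral_mono_set hint (.of_forall (cellDensity_nonneg h))
    (Set.iUnion₂_subset fun _ _ ↦ Set.inter_subset_left).eventuallyLE

theorem IsLocallyFiniteCover.volume_voronoiCell_le_of_subset {P : Set ℂ} {R : ℝ} {p : ℂ}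
    (hP : IsLocallyFiniteCover P R) (hp : p ∈ P) (h : cos (a - a') ≤ -1 / 2)
    (hcell : ∀ z ∈ voronoiCell P p, z - p ∈ truncatedDisk a a') :
    volume (voronoiCell P p) ≤
      ENNReal.ofReal (totalDensity + tangentIntercept * (sides P p).ncard) := by
  have hcross {q : ℂ} (hq : q ∈ (hP.finite_sides p).toFinset) :=
    cross_sideStart_sub_sideEnd_sub_pos ((Set.Finite.mem_toFinset _).1 hq)
  refine (hP.volume_voronoiCell_le hp).trans ?_
  rw [← ENNReal.ofReal_sum_of_nonneg fun q hq ↦ half_pos (hcross hq) |>.le]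
  refine ENNReal.ofReal_le_ofReal ?_
  calc
    _ ≤ ∑ q ∈ (hP.finite_sides p).toFinset,
        (tangentIntercept + ∫ θ in directions (sideCone P p q), cellDensity a a' θ) := by
      refine Finset.sum_le_sum fun q hq ↦ ?_
      have hq' : q ∈ neighbors P p := ((Set.Finite.mem_toFinset _).1 hq).1
      exact sector_area_le h (hcell _ (hP.isLeast_sideMin hq').1)
        (hcell _ (hP.isGreatest_sideMax hq').1) (hcross hq)
    _ ≤ tangentIntercept * (sides P p).ncard + totalDensity := by
      rw [Finset.sum_add_distrib, Finset.sum_const, nsmul_eq_mul, mul_comm tangentIntercept,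
        Set.ncard_eq_toFinset_card _ (hP.finite_sides p)]
      gcongr
      exact sum_setIntegral_directions_le h _ (fun q _ ↦ (isOpen_openCone _ _).measurableSet)
        (by simpa using hP.pairwiseDisjoint_sideCone p)
    _ = _ := add_comm _ _

end Density

/-! ### Sites with two nearby sites in almost opposite directions -/

section Angle

variable {P : Set ℂ} {p q r z u v : ℂ}

lemma cos_arg_sub_arg (hu : u ≠ 0) (hv : v ≠ 0) :
    cos (u.arg - v.arg) = cos (InnerProductGeometry.angle u v) := by
  rw [Complex.angle_eq_abs_arg hu hv, cos_abs, ← Real.Angle.cos_coe, Real.Angle.coe_sub,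
    ← Complex.arg_div_coe_angle hu hv, Real.Angle.cos_coe]

lemma inner_exp_arg_sub_le (hq : q ∈ P) (hqp : q ≠ p) (hdist : dist q p ≤ 1)
    (hz : z ∈ voronoiCell P p) :
    ⟪Complex.exp ((q - p).arg * Complex.I), z - p⟫ ≤ 1 / 2 := by
  have hpos : 0 < ‖q - p‖ := norm_pos_iff.2 (sub_ne_zero.2 hqp)
  have hle := dist_le_dist_iff_inner.1 (hz q hq)
  rw [dist_eq_norm] at hdist
  rw [real_inner_comm, ← Complex.norm_mul_exp_arg_mul_I (q - p), ← Complex.real_smul,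
    real_inner_smul_left, Complex.real_smul, Complex.norm_mul_exp_arg_mul_I] at hle
  nlinarith

theorem IsLocallyFiniteCover.volume_voronoiCell_le_of_angle (hP : IsLocallyFiniteCover P 1)
    (hp : p ∈ P) (hq : q ∈ P) (hr : r ∈ P) (hqp : dist q p ≤ 1) (hrp : dist r p ≤ 1)
    (h : 2 * π / 3 ≤ EuclideanGeometry.angle q p r) :
    volume (voronoiCell P p) ≤
      ENNReal.ofReal (totalDensity + tangentIntercept * (sides P p).ncard) := by
  have hne : q ≠ p ∧ r ≠ p := by
    constructor <;> rintro rfl <;> simp at h <;> linarith [pi_pos]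
  refine hP.volume_voronoiCell_le_of_subset hp (a := (q - p).arg) (a' := (r - p).arg) ?_
    fun z hz ↦ ⟨?_, inner_exp_arg_sub_le hq hne.1 hqp hz, inner_exp_arg_sub_le hr hne.2 hrp hz⟩
  · rw [cos_arg_sub_arg (sub_ne_zero.2 hne.1) (sub_ne_zero.2 hne.2),
      ← cos_two_mul_pi_div_three]
    exact cos_le_cos_of_nonneg_of_le_pi (by positivity) (InnerProductGeometry.angle_le_pi _ _) h
  · simpa only [dist_eq_norm] using hP.dist_le hz

end Angle

/-! ### Counting sites -/

section Counting

open scoped Finset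

variable {ι : Type*}

lemma IsLocallyFiniteCover.volume_voronoiCell_le_pi {P : Set ℂ} (hP : IsLocallyFiniteCover P 1)
    (p : ℂ) : volume (voronoiCell P p) ≤ ENNReal.ofReal π := by
  refine (measure_mono (hP.voronoiCell_subset_closedBall p)).trans_eq ?_
  rw [Complex.volume_closedBall, ENNReal.ofReal_one, one_pow, one_mul]
  exact (ENNReal.ofReal_coe_nnreal (p := NNReal.pi)).symm

lemma sum_totalDensity_add_le {P : Set ℂ} {A A' : Finset ℂ} (hA : A ⊆ A')
    (h : ∑ p ∈ A, (sides P p).ncard ≤ 6 * #A') :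
    ∑ p ∈ A, (totalDensity + tangentIntercept * (sides P p).ncard) ≤ (1 + √3 / 2) * #A' := by
  have hcard : (#A : ℝ) ≤ #A' := by exact_mod_cast Finset.card_le_card hA
  have hsum : (∑ p ∈ A, (sides P p).ncard : ℝ) ≤ 6 * #A' := by exact_mod_cast h
  calc
    _ = totalDensity * #A + tangentIntercept * ∑ p ∈ A, ((sides P p).ncard : ℝ) := by
      rw [Finset.sum_add_distrib, Finset.sum_const, nsmul_eq_mul, ← Finset.mul_sum, mul_comm]
    _ ≤ totalDensity * #A' + tangentIntercept * (6 * #A') := by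
      have := totalDensity_nonneg
      have := tangentIntercept_pos
      gcongr
    _ = _ := by
      rw [← totalDensity_add]
      ring

/-- Cells that meet `S` belong to sites at distance at most `1` from `S`, and a site whose cell
meets one of these cells has distance at most `3` from `S`. -/
theorem IsLocallyFiniteCover.volume_le_add_card {P S : Set ℂ} (hP : IsLocallyFiniteCover P 1)
    (E A' : Finset ℂ) (hA' : ∀ p, p ∈ A' ↔ p ∈ P ∧ ∃ z ∈ S, dist p z ≤ 3)
    (hcell : ∀ p ∈ P, p ∉ E → volume (voronoiCell P p) ≤
      ENNReal.ofReal (totalDensity + tangentIntercept * (sides P p).ncard)) :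
    volume S ≤ ENNReal.ofReal π * #E + ENNReal.ofReal (1 + √3 / 2) * #A' := by
  classical
  set A := {p ∈ A' | ∃ z ∈ S, dist p z ≤ 1}
  have hsides : ∑ p ∈ A, (sides P p).ncard ≤ 6 * #A' := by
    refine hP.sum_ncard_sides_le (Finset.filter_subset _ _) (fun p hp ↦ ((hA' p).1 hp).1)
      fun p hp v hv r hr hvr ↦ ?_
    obtain ⟨-, z, hz, hpz⟩ := Finset.mem_filter.1 hp
    refine (hA' r).2 ⟨hr, z, hz, ?_⟩
    linarith [dist_triangle4 r v p z, hP.dist_le hv, hP.dist_le hvr, dist_comm r v]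
  have hcover : S ⊆ ⋃ p ∈ A, voronoiCell P p := fun z hz ↦ by
    obtain ⟨p, hp, hzp⟩ := hP.exists_mem_voronoiCell z
    have hpz : dist p z ≤ 1 := dist_comm z p ▸ hP.dist_le hzp
    exact Set.mem_biUnion (Finset.mem_coe.2 (Finset.mem_filter.2
      ⟨(hA' p).2 ⟨hp, z, hz, hpz.trans (by norm_num)⟩, z, hz, hpz⟩)) hzp
  have hnonneg (p : ℂ) : 0 ≤ totalDensity + tangentIntercept * (sides P p).ncard := by
    have := totalDensity_nonneg
    have := tangentIntercept_pos
    positivity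
  calc
    volume S ≤ ∑ p ∈ A, volume (voronoiCell P p) :=
      (measure_mono hcover).trans (measure_biUnion_finset_le _ _)
    _ = ∑ p ∈ A ∩ E, volume (voronoiCell P p) + ∑ p ∈ A \ E, volume (voronoiCell P p) :=
      (Finset.sum_inter_add_sum_sdiff ..).symm
    _ ≤ ∑ _p ∈ E, ENNReal.ofReal π + ∑ p ∈ A,
        ENNReal.ofReal (totalDensity + tangentIntercept * (sides P p).ncard) := by
      gcongr ?_ + ?_
      · exact (Finset.sum_le_sum fun p _ ↦ hP.volume_voronoiCell_le_pi p).trans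
          (Finset.sum_le_sum_of_subset Finset.inter_subset_right)
      · refine (Finset.sum_le_sum fun p hp ↦ ?_).trans
          (Finset.sum_le_sum_of_subset Finset.sdiff_subset)
        obtain ⟨hpA, hpE⟩ := Finset.mem_sdiff.1 hp
        exact hcell p ((hA' p).1 (Finset.mem_filter.1 hpA).1).1 hpE
    _ ≤ _ := by
      rw [Finset.sum_const, nsmul_eq_mul, mul_comm, ← ENNReal.ofReal_sum_of_nonneg
        fun p _ ↦ hnonneg p, ← ENNReal.ofReal_natCast #A', ← ENNReal.ofReal_mul (by positivity)]
      gcongr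
      exact sum_totalDensity_add_le (Finset.filter_subset _ _) hsides

/-- The points `C j` and `C k` lie within distance `1` of `C i`, and are seen from there at an angle
of at least `2 * π / 3`. -/
def IsFlatTurn {E : Type*} [NormedAddCommGroup E] [InnerProductSpace ℝ E] (C : ι → E)
    (j i k : ι) : Prop :=
  dist (C j) (C i) ≤ 1 ∧ dist (C k) (C i) ≤ 1 ∧
    2 * π / 3 ≤ EuclideanGeometry.angle (C j) (C i) (C k)

theorem exists_volume_le_add_encard (C : ι → ℂ) (hC : IsLocallyFiniteCover (Set.range C) 1)
    (hturn : ∀ᶠ i in cofinite, ∃ j k, IsFlatTurn C j i k) :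
    ∃ c : ℝ, 0 ≤ c ∧ ∀ S : Set ℂ, volume S ≤
      ENNReal.ofReal c + ENNReal.ofReal (1 + √3 / 2) *
        {i | ∃ z ∈ S, dist (C i) z ≤ 3}.encard := by
  classical
  set E : Finset ℂ := (eventually_cofinite.1 hturn).toFinset.image C
  have hcell : ∀ p ∈ Set.range C, p ∉ E → volume (voronoiCell (Set.range C) p) ≤
      ENNReal.ofReal (totalDensity + tangentIntercept * (sides (Set.range C) p).ncard) := by
    rintro _ ⟨i, rfl⟩ hi
    obtain ⟨j, k, hji, hki, hangle⟩ : ∃ j k, IsFlatTurn C j i k := by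
      by_contra hi'
      exact hi (Finset.mem_image_of_mem C ((Set.Finite.mem_toFinset _).2 hi'))
    exact hC.volume_voronoiCell_le_of_angle ⟨i, rfl⟩ ⟨j, rfl⟩ ⟨k, rfl⟩ hji hki hangle
  refine ⟨π * #E, by positivity, fun S ↦ ?_⟩
  obtain hinf | hfin := {i | ∃ z ∈ S, dist (C i) z ≤ 3}.infinite_or_finite
  · have : ENNReal.ofReal (1 + √3 / 2) ≠ 0 := by simpa using by positivity
    simp [hinf.encard_eq, ENNReal.mul_top this]
  · refine (hC.volume_le_add_card E (hfin.toFinset.image C) (fun p ↦ ?_) hcell).trans ?_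
    · simp only [Finset.mem_image, Set.Finite.mem_toFinset, Set.mem_range]
      grind
    · rw [ENNReal.ofReal_mul pi_nonneg, ENNReal.ofReal_natCast, hfin.encard_eq_coe_toFinset_card,
        ENat.toENNReal_coe]
      gcongr
      exact Finset.card_image_le

end Counting

/-! ### The lower density -/

section LowerDensity

variable {ι : Type*} {C : ι → Pt}

/-- The linear isometry between the Euclidean plane and the complex plane. -/
def planeIsometry : Pt ≃ₗᵢ[ℝ] ℂ := Complex.orthonormalBasisOneI.repr.symm

lemma abs_apply_sub_le_dist (x y : Pt) (k : Fin 2) : |x k - y k| ≤ dist x y := by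
  rw [dist_eq_norm]
  exact PiLp.norm_apply_le (x - y) k

lemma isOpen_openSquare (l : ℝ) : IsOpen (openSquare l) := by
  have h (k : Fin 2) : IsOpen {x : Pt | |x k| < l} := isOpen_lt (by fun_prop) continuous_const
  exact (h 0).inter (h 1)

lemma volume_openSquare (l : ℝ) : volume (openSquare l) = ENNReal.ofReal (2 * l) ^ 2 := by
  have hpre : openSquare l = WithLp.ofLp ⁻¹' Set.univ.pi fun _ : Fin 2 ↦ Set.Ioo (-l) l := by
    ext x
    simp [openSquare, abs_lt]
  rw [hpre, (PiLp.volume_preserving_ofLp (Fin 2)).measure_preimage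
    (MeasurableSet.univ_pi fun _ ↦ measurableSet_Ioo).nullMeasurableSet, Real.volume_pi_Ioo]
  simp [sub_neg_eq_add, two_mul]

lemma monotone_Ncount (C : ι → Pt) : Monotone (Ncount C) := fun l m h ↦ by
  refine ENat.toENNReal_mono (Set.encard_le_encard fun i ↦ ?_)
  rintro ⟨x, hx, hx0, hx1⟩
  exact ⟨x, hx, hx0.trans_le h, hx1.trans_le h⟩

lemma mem_openSquare_add_of_dist_le {x y : Pt} {l r : ℝ} (hy : y ∈ openSquare l)
    (h : dist x y ≤ r) : x ∈ openSquare (l + r) := by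
  have hlt (k : Fin 2) (hk : |y k| < l) : |x k| < l + r := by
    linarith [abs_sub_abs_le_abs_sub (x k) (y k), abs_apply_sub_le_dist x y k]
  exact ⟨hlt 0 hy.1, hlt 1 hy.2⟩

lemma encard_le_Ncount (C : ι → Pt) (l r : ℝ) :
    ({i | ∃ z ∈ openSquare l, dist (C i) z ≤ r}.encard : ℝ≥0∞) ≤ Ncount C (l + r) := by
  refine ENat.toENNReal_mono (Set.encard_le_encard ?_)
  rintro i ⟨z, hz, hiz⟩
  exact ⟨C i, mem_closedBall_self zero_le_one, mem_openSquare_add_of_dist_le hz hiz⟩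

lemma isLocallyFiniteCover_range (hcover : (⋃ i, closedBall (C i) 1) = Set.univ)
    (hC : ∀ l, Ncount C l ≠ ⊤) : IsLocallyFiniteCover (Set.range C) 1 where
  finite_inter_closedBall z r := by
    have hz : z ∈ openSquare (‖z‖ + 1) := by
      constructor <;> simpa using (PiLp.norm_apply_le z _).trans_lt (lt_add_one _)
    have hfin : {i | ∃ z' ∈ openSquare (‖z‖ + 1), dist (C i) z' ≤ r}.Finite := by
      rw [← Set.encard_ne_top_iff, Ne, ← ENat.toENNReal_eq_top]
      exact ne_top_of_le_ne_top (hC _) (encard_le_Ncount C _ r)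
    refine (hfin.image C).subset ?_
    rintro _ ⟨⟨i, rfl⟩, hi⟩
    exact ⟨i, ⟨z, hz, hi⟩, rfl⟩
  exists_dist_le z := by
    obtain ⟨i, hi⟩ := Set.mem_iUnion.1 (hcover.ge (Set.mem_univ z))
    exact ⟨C i, ⟨i, rfl⟩, hi⟩

lemma exists_sq_le_add_Ncount (hC : IsLocallyFiniteCover (Set.range C) 1)
    (hturn : ∀ᶠ i in cofinite, ∃ j k, IsFlatTurn C j i k) :
    ∃ c : ℝ, 0 ≤ c ∧ ∀ l, ENNReal.ofReal (2 * (l - 3)) ^ 2 ≤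
      ENNReal.ofReal c + ENNReal.ofReal (1 + √3 / 2) * Ncount C l := by
  have hC' : IsLocallyFiniteCover (Set.range (planeIsometry ∘ C)) 1 := by
    rw [Set.range_comp]
    exact hC.image planeIsometry.toIsometryEquiv
  have hturn' : ∀ᶠ i in cofinite, ∃ j k, IsFlatTurn (planeIsometry ∘ C) j i k := by
    filter_upwards [hturn] with i ⟨j, k, hji, hki, hangle⟩
    refine ⟨j, k, by simpa, by simpa, hangle.trans_eq ?_⟩
    exact (planeIsometry.toLinearIsometry.toAffineIsometry.angle_map _ _ _).symm
  obtain ⟨c, hc, hvol⟩ := exists_volume_le_add_encard _ hC' hturn'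
  refine ⟨c, hc, fun l ↦ ?_⟩
  have hvol' := hvol (planeIsometry.symm ⁻¹' openSquare (l - 3))
  rw [planeIsometry.symm.measurePreserving.measure_preimage
    (isOpen_openSquare _).measurableSet.nullMeasurableSet, volume_openSquare] at hvol'
  refine hvol'.trans ?_
  gcongr
  refine (ENat.toENNReal_mono (Set.encard_le_encard fun i ↦ ?_)).trans
    ((encard_le_Ncount C (l - 3) 3).trans_eq (by rw [sub_add_cancel]))
  rintro ⟨z, hz, hiz⟩
  refine ⟨planeIsometry.symm z, hz, ?_⟩
  rwa [← planeIsometry.dist_map, planeIsometry.apply_symm_apply]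

lemma tendsto_sq_sub_div (K c : ℝ) :
    Tendsto (fun l : ℝ ↦ ((2 * (l - 3)) ^ 2 - c) / K * π / (4 * l ^ 2)) atTop (𝓝 (π / K)) := by
  have hinv : Tendsto (fun l : ℝ ↦ l⁻¹) atTop (𝓝 0) := tendsto_inv_atTop_zero
  have hlim : Tendsto (fun l : ℝ ↦ π / K * ((1 - 3 * l⁻¹) ^ 2 - c / 4 * l⁻¹ ^ 2)) atTop
      (𝓝 (π / K * ((1 - 3 * 0) ^ 2 - c / 4 * 0 ^ 2))) :=
    (((tendsto_const_nhds.sub (hinv.const_mul 3)).pow 2).sub ((hinv.pow 2).const_mul _)).const_mul _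
  have heq : π / K * ((1 - 3 * 0) ^ 2 - c / 4 * 0 ^ 2) = π / K := by ring
  rw [heq] at hlim
  refine hlim.congr' ?_
  filter_upwards [eventually_gt_atTop 0] with l hl
  field_simp
  ring

lemma le_lowerDensity {K c : ℝ} (hK : 0 < K) (hc : 0 ≤ c)
    (h : ∀ᶠ l : ℝ in atTop, ENNReal.ofReal (2 * (l - 3)) ^ 2 ≤
      ENNReal.ofReal c + ENNReal.ofReal K * Ncount C l) :
    ENNReal.ofReal (π / K) ≤ lowerDensity C := by
  rw [← (ENNReal.tendsto_ofReal (tendsto_sq_sub_div K c)).liminf_eq]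
  refine liminf_le_liminf ?_
  filter_upwards [h, eventually_gt_atTop 3] with l hl h3
  rw [← ENNReal.ofReal_pow (by linarith), ← tsub_le_iff_left, ← ENNReal.ofReal_sub _ hc] at hl
  rw [ENNReal.ofReal_div_of_pos (by positivity), ENNReal.ofReal_mul' pi_nonneg,
    ENNReal.ofReal_div_of_pos hK]
  gcongr
  exact ENNReal.div_le_of_le_mul' hl

theorem lower_density_ge_general (C : ι → Pt)
    (hcover : (⋃ i, closedBall (C i) 1) = Set.univ)
    (hturn : ∀ᶠ i in cofinite, ∃ j k, IsFlatTurn C j i k) :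
    ENNReal.ofReal (2 * π / (2 + √3)) ≤ lowerDensity C := by
  have hdiv : 2 * π / (2 + √3) = π / (1 + √3 / 2) := by field_simp
  rw [hdiv]
  by_cases hC : ∀ l, Ncount C l ≠ ⊤
  · obtain ⟨c, hc, hle⟩ := exists_sq_le_add_Ncount (isLocallyFiniteCover_range hcover hC) hturn
    exact le_lowerDensity (by positivity) hc (.of_forall hle)
  · push Not at hC
    obtain ⟨l, hl⟩ := hC
    refine le_lowerDensity (by positivity) le_rfl ?_
    filter_upwards [eventually_ge_atTop l] with m hm
    rw [top_le_iff.1 (hl.ge.trans (monotone_Ncount C hm)),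
      ENNReal.mul_top (by simpa using by positivity), add_top]
    exact le_top

end LowerDensity

/-- Lower bound for the density of a sequence covering of the plane by unit disks, each disk
containing the center of the next, with no turn sharper than `2π/3`. -/
theorem lower_density_ge (C : ℕ → Pt)
    (hcover : (⋃ n, closedBall (C n) 1) = Set.univ)
    (hdist : ∀ n, 1 ≤ n → 0 < dist (C n) (C (n - 1)) ∧ dist (C n) (C (n - 1)) ≤ 1)
    (hangle : ∀ n, 1 ≤ n →
      2 * π / 3 ≤ EuclideanGeometry.angle (C (n - 1)) (C n) (C (n + 1))) :
    ENNReal.ofReal (2 * π / (2 + Real.sqrt 3)) ≤ lowerDensity C := by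
  refine lower_density_ge_general C hcover ?_
  filter_upwards [(Set.finite_singleton 0).compl_mem_cofinite] with n hn
  have hn : 1 ≤ n := Nat.one_le_iff_ne_zero.2 hn
  exact ⟨n - 1, n + 1, dist_comm (C n) _ ▸ (hdist n hn).2, (hdist (n + 1) n.succ_pos).2,
    hangle n hn⟩
end
end

section
/- There exists a sequence C : ℕ → ℝ² such that: (i) ⋃ₙ closedBall(C n, 1) = ℝ²; (ii) for every n ≥ 1, 0 < dist(C n, C (n−1)) ≤ 1; (iii) for every n ≥ 1, the undirected Euclidean angle ∠ C(n−1) C(n) C(n+1) is at least 2π/3; and (iv) limsup_{λ→∞} N_C(λ)·π/(4λ²) ≤ 2π/(2+√3), the limsup being computed in the extended nonnegative reals. -/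
open Metric MeasureTheory Filter Real
open scoped ENNReal

noncomputable section

/-!
A row of unit disks with centers at unit spacing and a second row, at distance `1 + √3 / 2` and
offset by `1 / 2`, cover the strip between them; infinitely many such rows cover the plane with
density `π / (1 + √3 / 2) = 2π / (2 + √3)`. The rows are joined into one sequence by a rectangular
spiral of expanding sides. A turn through `π / 2` at a corner would be too sharp, so the path turns
the other way, through `3π / 2`, along a loop of seven steps; the disks on the loop cover the square
that the rows miss at that corner. The numbers of corners and of incomplete steps met by a square of
side `2λ` are `O(λ)`, so they do not affect the density.
-/

namespace SpiralCovering

section Concat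

variable {α : Type*} {L : ℕ → ℕ} {P : ℕ → ℕ → α}

/-- The index at which the `m`-th block starts when blocks of lengths `L 0, L 1, …` are laid end
to end. -/
def blockStart (L : ℕ → ℕ) (m : ℕ) : ℕ := ∑ i ∈ Finset.range m, L i

lemma blockStart_succ (m : ℕ) : blockStart L (m + 1) = blockStart L m + L m :=
  Finset.sum_range_succ _ _

lemma blockStart_mono : Monotone (blockStart L) :=
  monotone_nat_of_le_succ fun m => (Nat.le_add_right _ _).trans_eq (blockStart_succ m).symm

/-- The block containing the `n`-th term of a concatenation of blocks of lengths `L 0, L 1, …`,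
paired with the position of that term inside the block. -/
def blockPos (L : ℕ → ℕ) : ℕ → ℕ × ℕ
  | 0 => (0, 0)
  | n + 1 =>
    if (blockPos L n).2 + 1 < L (blockPos L n).1 then ((blockPos L n).1, (blockPos L n).2 + 1)
    else ((blockPos L n).1 + 1, 0)

lemma blockPos_blockStart_add (hL : ∀ m, 0 < L m) {m j : ℕ} (hj : j < L m) :
    blockPos L (blockStart L m + j) = (m, j) := by
  induction m generalizing j with
  | zero =>
    induction j with
    | zero => simp [blockStart, blockPos]
    | succ j ih => rw [← add_assoc, blockPos, ih (by omega), if_pos hj]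
  | succ m ihm =>
    induction j with
    | zero =>
      have hlast : blockStart L (m + 1) + 0 = blockStart L m + (L m - 1) + 1 := by
        have := hL m
        rw [blockStart_succ]
        omega
      rw [hlast, blockPos, ihm (by have := hL m; omega), if_neg (by simp only; omega)]
    | succ j ih => rw [← add_assoc, blockPos, ih (by omega), if_pos hj]

lemma exists_eq_blockStart_add (hL : ∀ m, 0 < L m) (n : ℕ) :
    ∃ m j, j < L m ∧ n = blockStart L m + j := by
  induction n with
  | zero => exact ⟨0, 0, hL 0, by simp [blockStart]⟩
  | succ n ih =>
    obtain ⟨m, j, hj, rfl⟩ := ih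
    rcases (Nat.succ_le_of_lt hj).lt_or_eq with hlt | heq
    · exact ⟨m, j + 1, hlt, rfl⟩
    · exact ⟨m + 1, 0, hL (m + 1), by rw [blockStart_succ]; omega⟩

/-- The concatenation of the finite paths `P m 0, …, P m (L m)`, the last point of each being the
first point of the next and listed only once. -/
def concat (L : ℕ → ℕ) (P : ℕ → ℕ → α) (n : ℕ) : α := P (blockPos L n).1 (blockPos L n).2

lemma concat_blockStart_add (hL : ∀ m, 0 < L m) (hP : ∀ m, P m (L m) = P (m + 1) 0) {m j : ℕ}
    (hj : j ≤ L m) : concat L P (blockStart L m + j) = P m j := by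
  rcases hj.lt_or_eq with hlt | rfl
  · rw [concat, blockPos_blockStart_add hL hlt]
  · rw [concat, ← blockStart_succ, ← add_zero (blockStart L (m + 1)),
      blockPos_blockStart_add hL (hL (m + 1)), hP]

end Concat

section Grid

variable {θ s t : ℝ} {j : ℕ}

/-- The largest element of the grid `ℤ + θ` that is at most `s`. -/
def gridFloor (θ s : ℝ) : ℝ := ⌊s - θ⌋ + θ

/-- The number of grid steps needed to get from `gridFloor θ s` to `t` or beyond. -/
def gridSteps (θ s t : ℝ) : ℕ := ⌈t - gridFloor θ s⌉₊

/-- The `j`-th term of the walk from `s` to `t` along `ℤ + θ`, which rests at the interior grid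
points and at both ends: the grid points from `gridFloor θ s` on, clamped to `[s, t]`. -/
def gridPoint (θ s t : ℝ) (j : ℕ) : ℝ := max s (min t (gridFloor θ s + j))

lemma gridFloor_le : gridFloor θ s ≤ s := by
  unfold gridFloor
  linarith [Int.floor_le (s - θ)]

lemma lt_gridFloor_add_one : s < gridFloor θ s + 1 := by
  unfold gridFloor
  linarith [Int.lt_floor_add_one (s - θ)]

lemma gridSteps_pos (hst : s < t) : 0 < gridSteps θ s t :=
  Nat.ceil_pos.mpr (sub_pos.mpr (gridFloor_le.trans_lt hst))

lemma gridSteps_lt (hst : s ≤ t) : (gridSteps θ s t : ℝ) < t - s + 2 := by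
  have := Nat.ceil_lt_add_one (sub_nonneg.mpr ((gridFloor_le (θ := θ)).trans hst))
  have := lt_gridFloor_add_one (θ := θ) (s := s)
  unfold gridSteps
  linarith

lemma gridPoint_zero : gridPoint θ s t 0 = s := by
  rw [gridPoint, Nat.cast_zero, add_zero]
  exact max_eq_left ((min_le_right _ _).trans gridFloor_le)

lemma gridPoint_of_le (hst : s ≤ t) (hj : gridSteps θ s t ≤ j) : gridPoint θ s t j = t := by
  rw [gridPoint, min_eq_left (by linarith [Nat.ceil_le.mp hj]), max_eq_right hst]

lemma gridPoint_lt_succ (hst : s < t) (hj : j < gridSteps θ s t) :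
    gridPoint θ s t j < gridPoint θ s t (j + 1) := by
  have hlt : gridFloor θ s + j < t := by linarith [Nat.lt_ceil.mp hj]
  have hs : s < gridFloor θ s + (j + 1) := by
    linarith [lt_gridFloor_add_one (θ := θ) (s := s), j.cast_nonneg (α := ℝ)]
  rw [gridPoint, gridPoint, min_eq_right hlt.le, Nat.cast_succ]
  exact lt_max_of_lt_right (max_lt (lt_min hst hs) (lt_min hlt (by linarith)))

lemma gridPoint_succ_le : gridPoint θ s t (j + 1) ≤ gridPoint θ s t j + 1 := by
  rw [gridPoint, gridPoint, Nat.cast_succ, ← max_add_add_right, ← min_add_add_right, ← add_assoc]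
  gcongr <;> linarith

lemma exists_gridPoint_eq_clamp (hst : s ≤ t) (i : ℤ) :
    ∃ j ≤ gridSteps θ s t, gridPoint θ s t j = max s (min t (i + θ)) := by
  rcases le_total i ⌊s - θ⌋ with hi | hi
  · have hle : (i : ℝ) + θ ≤ s := by linarith [Int.le_floor.mp hi]
    exact ⟨0, Nat.zero_le _, by rw [gridPoint_zero, max_eq_left ((min_le_right _ _).trans hle)]⟩
  obtain ⟨j, hj⟩ := Int.exists_add_of_le hi
  have hgrid : gridFloor θ s + j = i + θ := by
    rw [hj, gridFloor]
    push_cast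
    ring
  rcases le_total j (gridSteps θ s t) with hle | hge
  · exact ⟨j, hle, by rw [gridPoint, hgrid]⟩
  · exact ⟨_, le_rfl, by
      rw [gridPoint_of_le hst le_rfl, ← hgrid, ← gridPoint, gridPoint_of_le hst hge]⟩

lemma exists_abs_sub_gridPoint_le {x : ℝ} (hx : x ∈ Set.Icc s t) (i : ℤ) :
    ∃ j ≤ gridSteps θ s t, |x - gridPoint θ s t j| ≤ |x - (i + θ)| := by
  have hst : s ≤ t := hx.1.trans hx.2
  obtain ⟨j, hj, hclamp⟩ := exists_gridPoint_eq_clamp (θ := θ) hst i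
  refine ⟨j, hj, ?_⟩
  have hproj := Set.abs_projIcc_sub_projIcc hst (c := x) (d := i + θ)
  rwa [Set.projIcc_of_mem hst hx, Set.coe_projIcc, ← hclamp] at hproj

end Grid

open InnerProductGeometry in
lemma two_pi_div_three_le_angle {V P : Type*} [NormedAddCommGroup V] [InnerProductSpace ℝ V]
    [MetricSpace P] [NormedAddTorsor V P] {p q r : P} (hpos : 0 < inner ℝ (q -ᵥ p) (r -ᵥ q))
    (hle : ‖q -ᵥ p‖ ^ 2 * ‖r -ᵥ q‖ ^ 2 ≤ 4 * inner ℝ (q -ᵥ p) (r -ᵥ q) ^ 2) :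
    2 * π / 3 ≤ EuclideanGeometry.angle p q r := by
  have hnorm : ‖q -ᵥ p‖ * ‖r -ᵥ q‖ ≤ 2 * inner ℝ (q -ᵥ p) (r -ᵥ q) :=
    le_of_sq_le_sq (by linarith) (by positivity)
  have hturn : angle (q -ᵥ p) (r -ᵥ q) ≤ π / 3 := by
    rw [← Real.arccos_cos (x := π / 3) (by positivity) (by linarith [Real.pi_pos]),
      Real.cos_pi_div_three]
    refine Real.arccos_le_arccos ?_
    rw [le_div_iff₀ (hpos.trans_le (real_inner_le_norm _ _))]
    linarith
  rw [EuclideanGeometry.angle, ← neg_vsub_eq_vsub_rev q p, angle_neg_left]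
  linarith

section Frame

/-- The clockwise quarter turn of the complex plane. -/
def quarterTurn : ℂ ≃ₗᵢ[ℝ] ℂ := rotation (Circle.exp (-(π / 2)))

lemma quarterTurn_apply (x y : ℝ) : quarterTurn ⟨x, y⟩ = ⟨y, -x⟩ := by
  have hexp : (Circle.exp (-(π / 2)) : ℂ) = -Complex.I := by
    rw [Circle.coe_exp]
    push_cast
    rw [neg_mul, Complex.exp_neg, Complex.exp_pi_div_two_mul_I, Complex.inv_I]
  rw [quarterTurn, rotation_apply, hexp]
  apply Complex.ext <;> simp

/-- The isometric coordinate frame of the `m`-th side of the spiral, turned clockwise by `m`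
right angles. In its own frame every side is horizontal and runs to the right. -/
def frame : ℕ → ℂ ≃ₗᵢ[ℝ] Pt
  | 0 => Complex.orthonormalBasisOneI.repr
  | m + 1 => quarterTurn.trans (frame m)

lemma frame_succ (m : ℕ) (x y : ℝ) : frame (m + 1) ⟨x, y⟩ = frame m ⟨y, -x⟩ := by
  rw [frame, LinearIsometryEquiv.trans_apply, quarterTurn_apply]

lemma frame_eq_frame_succ (m : ℕ) (x y : ℝ) : frame m ⟨x, y⟩ = frame (m + 1) ⟨-y, x⟩ := by
  rw [frame_succ, neg_neg]

lemma frame_add_four (m : ℕ) (x y : ℝ) : frame (m + 4) ⟨x, y⟩ = frame m ⟨x, y⟩ := by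
  simp only [frame_succ, neg_neg]

lemma frame_mem_openSquare {m : ℕ} {x y l : ℝ} :
    frame m ⟨x, y⟩ ∈ openSquare l ↔ |x| < l ∧ |y| < l := by
  induction m generalizing x y with
  | zero => simp [frame, openSquare, Complex.orthonormalBasisOneI_repr_apply]
  | succ m ih => rw [frame_succ, ih, abs_neg, and_comm]

lemma dist_frame_mk_mk (m : ℕ) (x x' y : ℝ) :
    dist (frame m ⟨x, y⟩) (frame m ⟨x', y⟩) = |x - x'| := by
  rw [LinearIsometryEquiv.dist_map]
  exact Complex.dist_of_im_eq rfl

lemma dist_frame_le_one (m : ℕ) {x y x' y' : ℝ} :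
    dist (frame m ⟨x, y⟩) (frame m ⟨x', y'⟩) ≤ 1 ↔ (x - x') ^ 2 + (y - y') ^ 2 ≤ 1 := by
  rw [LinearIsometryEquiv.dist_map, Complex.dist_eq_re_im, Real.sqrt_le_one]

lemma two_pi_div_three_le_angle_frame (m : ℕ) {z w v : ℂ}
    (hpos : 0 < (w - z).re * (v - w).re + (w - z).im * (v - w).im)
    (hle : Complex.normSq (w - z) * Complex.normSq (v - w) ≤
      4 * ((w - z).re * (v - w).re + (w - z).im * (v - w).im) ^ 2) :
    2 * π / 3 ≤ EuclideanGeometry.angle (frame m z) (frame m w) (frame m v) := by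
  have hinner : inner ℝ (w - z) (v - w) =
      (w - z).re * (v - w).re + (w - z).im * (v - w).im := by
    rw [Complex.inner, Complex.mul_re, Complex.conj_re, Complex.conj_im]
    ring
  apply two_pi_div_three_le_angle <;>
    simpa only [vsub_eq_sub, ← map_sub, LinearIsometryEquiv.inner_map_map,
      LinearIsometryEquiv.norm_map, Complex.sq_norm, hinner]

lemma two_pi_div_three_le_angle_frame_of_lt_of_lt (m : ℕ) {x₀ x₁ x₂ y : ℝ} (h₁ : x₀ < x₁)
    (h₂ : x₁ < x₂) :
    2 * π / 3 ≤ EuclideanGeometry.angle (frame m ⟨x₀, y⟩) (frame m ⟨x₁, y⟩) (frame m ⟨x₂, y⟩) := by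
  have := mul_pos (sub_pos.mpr h₁) (sub_pos.mpr h₂)
  apply two_pi_div_three_le_angle_frame <;>
    simp only [Complex.sub_re, Complex.sub_im, Complex.normSq_apply] <;> nlinarith

end Frame

section Spiral

/-- The distance between neighbouring parallel sides of the spiral: the largest one at which two
rows of unit disks, with centers at unit spacing and offset by `1 / 2`, cover the strip between
the rows. -/
def rowGap : ℝ := 1 + √3 / 2

lemma rowGap_pos : 0 < rowGap := by unfold rowGap; positivity

lemma rowGap_lt : rowGap < 1.867 := by
  have : √3 < 1.734 := by rw [Real.sqrt_lt'] <;> norm_num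
  unfold rowGap
  linarith

/-- The ordinate of the `m`-th side in its own frame, hence, for `0 < m`, the distance of its line
from the origin. Every full turn of four sides adds one `rowGap`. -/
def height (m : ℕ) : ℝ := rowGap * (2 * m - 1) / 8

lemma height_add_four (m : ℕ) : height (m + 4) = height m + rowGap := by
  unfold height
  push_cast
  ring

lemma height_strictMono : StrictMono height := strictMono_nat_of_lt_succ fun m => by
  unfold height
  push_cast
  linarith [rowGap_pos]

lemma exists_le_height {r : ℝ} (hr : 0 ≤ r) :
    ∃ m : ℕ, r ≤ height m ∧ (m : ℝ) ≤ 4 / rowGap * r + 3 / 2 := by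
  have hgap := rowGap_pos
  refine ⟨⌈4 / rowGap * r + 1 / 2⌉₊, ?_, ?_⟩
  · calc r = rowGap * (2 * (4 / rowGap * r + 1 / 2) - 1) / 8 := by field_simp; ring
      _ ≤ height _ := by unfold height; gcongr; exact Nat.le_ceil _
  · linarith [Nat.ceil_lt_add_one (show 0 ≤ 4 / rowGap * r + 1 / 2 by positivity)]

/-- The abscissa at which the `m`-th side starts, in its own frame. It is dictated by the end of
the preceding side, except for the first side, which is long enough to cover the innermost
rectangle. -/
def start : ℕ → ℝ
  | 0 => -height 3
  | m + 1 => -height m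

lemma start_lt_height_succ : ∀ m, start m < height (m + 1)
  | 0 => by
    simp only [start, height]
    push_cast
    linarith [rowGap_pos]
  | m + 1 => by
    simp only [start, height]
    push_cast
    linarith [rowGap_pos, mul_nonneg rowGap_pos.le (m.cast_nonneg (α := ℝ))]

/-- The closed loop, relative to a corner of the spiral, by which the path turns clockwise through
`π / 2` in seven steps, namely by turning counterclockwise through `3 * π / 2` in steps of at most
`π / 4`. Its disks cover the square of side `rowGap` outside the corner. -/
def loop : ℕ → ℂ
  | 1 => 1
  | 2 => ⟨3 / 2, 1 / 2⟩
  | 3 => ⟨3 / 2, 1⟩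
  | 4 => ⟨1, 3 / 2⟩
  | 5 => ⟨1 / 2, 3 / 2⟩
  | 6 => ⟨0, 1⟩
  | _ => 0

lemma loop_im_nonneg (i : ℕ) : 0 ≤ (loop i).im := by
  unfold loop
  split <;> norm_num

/-- The corner of the spiral at which the `m`-th side ends, in the frame of that side. -/
def corner (m : ℕ) : ℂ := ⟨height (m + 1), height m⟩

/-- The abscissas of the centers on the straight part of the `m`-th side. The offset `m / 8` of
the grid makes the `m`-th and the `(m + 4)`-th side alternate. -/
def rowPoint (m j : ℕ) : ℝ := gridPoint (m / 8) (start m) (height (m + 1)) j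

/-- The number of steps on the straight part of the `m`-th side. -/
def rowSteps (m : ℕ) : ℕ := gridSteps (m / 8) (start m) (height (m + 1))

lemma rowSteps_pos (m : ℕ) : 0 < rowSteps m := gridSteps_pos (start_lt_height_succ m)

lemma rowPoint_zero (m : ℕ) : rowPoint m 0 = start m := gridPoint_zero

lemma rowPoint_of_le {m j : ℕ} (hj : rowSteps m ≤ j) : rowPoint m j = height (m + 1) :=
  gridPoint_of_le (start_lt_height_succ m).le hj

lemma rowPoint_lt_succ {m j : ℕ} (hj : j < rowSteps m) : rowPoint m j < rowPoint m (j + 1) :=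
  gridPoint_lt_succ (start_lt_height_succ m) hj

/-- The number of steps of the `m`-th side, the loop at its end included. -/
def sideSteps (m : ℕ) : ℕ := rowSteps m + 7

/-- The path along the `m`-th side: a straight row of centers, followed by the loop around the
corner. -/
def side (m j : ℕ) : Pt := frame m (⟨rowPoint m j, height m⟩ + loop (j - rowSteps m))

lemma sideSteps_pos (m : ℕ) : 0 < sideSteps m := Nat.succ_pos _

lemma side_of_le {m j : ℕ} (hj : j ≤ rowSteps m) :
    side m j = frame m ⟨rowPoint m j, height m⟩ := by
  rw [side, Nat.sub_eq_zero_of_le hj, loop, add_zero] <;> simp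

lemma side_rowSteps_add (m i : ℕ) : side m (rowSteps m + i) = frame m (corner m + loop i) := by
  rw [side, rowPoint_of_le (Nat.le_add_right _ _), Nat.add_sub_cancel_left, corner]

lemma side_rowSteps (m : ℕ) : side m (rowSteps m) = frame m (corner m) := by
  rw [side_of_le le_rfl, rowPoint_of_le le_rfl, corner]

lemma side_rowSteps_add_one (m : ℕ) :
    side m (rowSteps m + 1) = frame m ⟨height (m + 1) + 1, height m⟩ := by
  rw [side_rowSteps_add]
  congr 1
  apply Complex.ext <;> simp [corner, loop]

lemma side_succ_zero (m : ℕ) : side (m + 1) 0 = frame m (corner m) := by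
  rw [side_of_le (Nat.zero_le _), rowPoint_zero, start, corner, ← frame_eq_frame_succ]

lemma side_sideSteps (m : ℕ) : side m (sideSteps m) = side (m + 1) 0 := by
  rw [sideSteps, side_rowSteps_add, side_succ_zero, loop, add_zero] <;> simp

lemma side_rowSteps_add_six (m : ℕ) :
    side m (rowSteps m + 6) = frame (m + 1) ⟨start (m + 1) - 1, height (m + 1)⟩ := by
  rw [side_rowSteps_add, frame_succ]
  congr 1
  apply Complex.ext <;> simp [corner, loop, start, add_comm]

lemma dist_loop_succ {i : ℕ} (hi : i < 7) :
    0 < dist (loop (i + 1)) (loop i) ∧ dist (loop (i + 1)) (loop i) ≤ 1 := by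
  rw [Complex.dist_eq_re_im, Real.sqrt_pos, Real.sqrt_le_one]
  interval_cases i <;> norm_num [loop]

lemma dist_side_succ {m j : ℕ} (hj : j < sideSteps m) :
    0 < dist (side m (j + 1)) (side m j) ∧ dist (side m (j + 1)) (side m j) ≤ 1 := by
  rcases lt_or_ge j (rowSteps m) with hrow | hloop
  · have hlt := rowPoint_lt_succ hrow
    have hle : rowPoint m (j + 1) ≤ rowPoint m j + 1 := gridPoint_succ_le
    have hdist : dist (side m (j + 1)) (side m j) = rowPoint m (j + 1) - rowPoint m j := by
      rw [side_of_le (Nat.succ_le_of_lt hrow), side_of_le hrow.le, dist_frame_mk_mk]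
      exact abs_of_pos (sub_pos.mpr hlt)
    rw [hdist]
    exact ⟨sub_pos.mpr hlt, by linarith⟩
  · obtain ⟨i, rfl⟩ := Nat.exists_eq_add_of_le hloop
    rw [add_assoc, side_rowSteps_add, side_rowSteps_add, LinearIsometryEquiv.dist_map,
      dist_add_left]
    exact dist_loop_succ (by unfold sideSteps at hj; omega)

lemma two_pi_div_three_le_angle_loop (m : ℕ) {i : ℕ} (hi : i < 6) :
    2 * π / 3 ≤ EuclideanGeometry.angle (frame m (corner m + loop i))
      (frame m (corner m + loop (i + 1))) (frame m (corner m + loop (i + 2))) := by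
  apply two_pi_div_three_le_angle_frame <;> simp only [add_sub_add_left_eq_sub] <;>
    interval_cases i <;> norm_num [loop, Complex.normSq_apply]

lemma two_pi_div_three_le_angle_side {m j : ℕ} (hj : j + 1 < sideSteps m) :
    2 * π / 3 ≤ EuclideanGeometry.angle (side m j) (side m (j + 1)) (side m (j + 2)) := by
  rcases lt_trichotomy (j + 1) (rowSteps m) with hrow | hend | hloop
  · rw [side_of_le (by omega), side_of_le hrow.le, side_of_le hrow]
    exact two_pi_div_three_le_angle_frame_of_lt_of_lt m (rowPoint_lt_succ (by omega))
      (rowPoint_lt_succ hrow)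
  · have hlt := rowPoint_lt_succ (m := m) (j := j) (by omega)
    rw [rowPoint_of_le hend.ge] at hlt
    rw [side_of_le (by omega), show j + 2 = rowSteps m + 1 by omega, hend, side_rowSteps,
      side_rowSteps_add_one, corner]
    exact two_pi_div_three_le_angle_frame_of_lt_of_lt m hlt (lt_add_one _)
  · obtain ⟨i, rfl⟩ := Nat.exists_eq_add_of_le (Nat.le_of_lt_succ hloop)
    rw [add_assoc, add_assoc, side_rowSteps_add, side_rowSteps_add, side_rowSteps_add]
    exact two_pi_div_three_le_angle_loop m (by unfold sideSteps at hj; omega)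

lemma two_pi_div_three_le_angle_side_succ (m : ℕ) :
    2 * π / 3 ≤ EuclideanGeometry.angle (side m (rowSteps m + 6)) (side (m + 1) 0)
      (side (m + 1) 1) := by
  have hlt := rowPoint_lt_succ (rowSteps_pos (m + 1))
  rw [rowPoint_zero] at hlt
  rw [side_rowSteps_add_six, side_of_le (Nat.zero_le _), rowPoint_zero,
    side_of_le (rowSteps_pos (m + 1))]
  exact two_pi_div_three_le_angle_frame_of_lt_of_lt (m + 1) (sub_one_lt _) hlt

/-- The sequence of centers: the sides of the spiral joined end to end. -/
def spiral : ℕ → Pt := concat sideSteps side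

lemma spiral_blockStart_add {m j : ℕ} (hj : j ≤ sideSteps m) :
    spiral (blockStart sideSteps m + j) = side m j :=
  concat_blockStart_add sideSteps_pos side_sideSteps hj

lemma dist_spiral_succ (n : ℕ) :
    0 < dist (spiral (n + 1)) (spiral n) ∧ dist (spiral (n + 1)) (spiral n) ≤ 1 := by
  obtain ⟨m, j, hj, rfl⟩ := exists_eq_blockStart_add sideSteps_pos n
  rw [add_assoc, spiral_blockStart_add hj, spiral_blockStart_add hj.le]
  exact dist_side_succ hj

lemma two_pi_div_three_le_angle_spiral (n : ℕ) :
    2 * π / 3 ≤ EuclideanGeometry.angle (spiral n) (spiral (n + 1)) (spiral (n + 2)) := by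
  obtain ⟨m, j, hj, rfl⟩ := exists_eq_blockStart_add sideSteps_pos n
  rw [add_assoc, add_assoc, spiral_blockStart_add hj.le, spiral_blockStart_add hj]
  rcases (Nat.succ_le_of_lt hj).lt_or_eq with hlt | heq
  · rw [spiral_blockStart_add hlt]
    exact two_pi_div_three_le_angle_side hlt
  · have hnext : blockStart sideSteps m + (j + 2) = blockStart sideSteps (m + 1) + 1 := by
      rw [blockStart_succ]
      omega
    have hlast : j = rowSteps m + 6 := by unfold sideSteps at heq; omega
    rw [hnext, spiral_blockStart_add (Nat.succ_le_of_lt (sideSteps_pos (m + 1))), heq,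
      side_sideSteps, hlast]
    exact two_pi_div_three_le_angle_side_succ m

end Spiral

section Covering

/-- The part of the plane covered by the unit disks centered on the spiral. -/
def cover : Set Pt := ⋃ n, closedBall (spiral n) 1

lemma mem_cover_of_dist_side_le {m j : ℕ} {p : Pt} (hj : j ≤ sideSteps m)
    (hp : dist p (side m j) ≤ 1) : p ∈ cover :=
  Set.mem_iUnion.mpr ⟨_, by rwa [spiral_blockStart_add hj]⟩

lemma frame_mem_cover_of_grid {m : ℕ} {x y : ℝ} (hx : x ∈ Set.Icc (start m) (height (m + 1)))
    (i : ℤ) (hd : (x - (i + m / 8)) ^ 2 + (y - height m) ^ 2 ≤ 1) : frame m ⟨x, y⟩ ∈ cover := by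
  obtain ⟨j, hj, hle⟩ := exists_abs_sub_gridPoint_le hx i (θ := m / 8)
  refine mem_cover_of_dist_side_le (m := m) (j := j) (hj.trans (Nat.le_add_right _ _)) ?_
  rw [side_of_le hj, dist_frame_le_one]
  have hsq : (x - rowPoint m j) ^ 2 ≤ (x - (i + m / 8)) ^ 2 := sq_le_sq.mpr hle
  linarith

lemma sq_add_sq_le_one_of_le_chord {u v : ℝ} (hu₀ : 0 ≤ u) (hu : u ≤ 1 / 2) (hv₀ : 0 ≤ v)
    (hv : v ≤ 1 - (2 - √3) * u) : u ^ 2 + v ^ 2 ≤ 1 := by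
  have hsqrt : √3 ^ 2 = 3 := Real.sq_sqrt (by norm_num)
  have hslope : 0 ≤ 2 - √3 := by nlinarith [Real.sqrt_nonneg 3]
  have : 0 ≤ 1 / 2 - u := by linarith
  calc u ^ 2 + v ^ 2 ≤ u ^ 2 + (1 - (2 - √3) * u) ^ 2 := by gcongr
    _ = 1 - 4 * (2 - √3) * (u * (1 / 2 - u)) := by linear_combination u ^ 2 * hsqrt
    _ ≤ 1 := sub_le_self _ (by positivity)

/-- The common chord of the two unit circles joins `(0, 1)` to `(1 / 2, √3 / 2)`, and the half turn
about its midpoint exchanges the two disks, so only the points below it have to be examined. -/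
lemma sq_add_sq_le_one_or {u v : ℝ} (hu₀ : 0 ≤ u) (hu : u ≤ 1 / 2) (hv₀ : 0 ≤ v)
    (hv : v ≤ rowGap) : u ^ 2 + v ^ 2 ≤ 1 ∨ (1 / 2 - u) ^ 2 + (rowGap - v) ^ 2 ≤ 1 := by
  rcases le_total v (1 - (2 - √3) * u) with hbelow | habove
  · exact .inl (sq_add_sq_le_one_of_le_chord hu₀ hu hv₀ hbelow)
  · refine .inr (sq_add_sq_le_one_of_le_chord (by linarith) (by linarith) (by linarith) ?_)
    unfold rowGap
    linarith

lemma exists_int_sq_add_sq_le_one {x y : ℝ} (hy₀ : 0 ≤ y) (hy : y ≤ rowGap) :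
    (∃ i : ℤ, (x - i) ^ 2 + y ^ 2 ≤ 1) ∨
      ∃ i : ℤ, (x - (i + 1 / 2)) ^ 2 + (y - rowGap) ^ 2 ≤ 1 := by
  have hx := Int.self_sub_floor x
  have hfract₀ := Int.fract_nonneg x
  have hfract₁ := (Int.fract_lt_one x).le
  rcases le_total (Int.fract x) (1 / 2) with hhalf | hhalf
  · refine (sq_add_sq_le_one_or hfract₀ hhalf hy₀ hy).imp (fun h => ⟨⌊x⌋, ?_⟩) fun h => ⟨⌊x⌋, ?_⟩
    · rwa [hx]
    · rwa [sub_add_eq_sub_sub, hx, sub_sq_comm, sub_sq_comm y]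
  · refine (sq_add_sq_le_one_or (u := 1 - Int.fract x) (by linarith) (by linarith) hy₀ hy).imp
      (fun h => ⟨⌊x⌋ + 1, ?_⟩) fun h => ⟨⌊x⌋, ?_⟩
    · rwa [Int.cast_add, Int.cast_one, sub_add_eq_sub_sub, hx, sub_sq_comm]
    · rw [sub_add_eq_sub_sub, hx, sub_sq_comm y]
      convert h using 2
      ring

lemma frame_mem_cover_of_strip {k : ℕ} {x y : ℝ} (hx : start k ≤ x) (hx' : start (k + 4) ≤ x)
    (hx₁ : x ≤ height (k + 1)) (hy : y ∈ Set.Icc (height k) (height (k + 4))) :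
    frame k ⟨x, y⟩ ∈ cover := by
  have hgap := height_add_four k
  have hx₁' : x ≤ height (k + 4 + 1) := hx₁.trans (height_strictMono.monotone (by omega))
  rcases exists_int_sq_add_sq_le_one (x := x - k / 8) (y := y - height k) (by linarith [hy.1])
    (by linarith [hy.2]) with ⟨i, hi⟩ | ⟨i, hi⟩
  · refine frame_mem_cover_of_grid ⟨hx, hx₁⟩ i ?_
    rwa [add_comm (i : ℝ), ← sub_sub]
  · rw [← frame_add_four]
    refine frame_mem_cover_of_grid ⟨hx', hx₁'⟩ i ?_
    rw [hgap]
    convert hi using 3 <;> push_cast <;> ring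

lemma exists_loop_dist_le_one {x y : ℝ} (hx : x ∈ Set.Icc 0 rowGap) (hy : y ∈ Set.Icc 0 rowGap) :
    ∃ i < 7, (x - (loop i).re) ^ 2 + (y - (loop i).im) ^ 2 ≤ 1 := by
  obtain ⟨hx₀, hx₁⟩ := hx
  obtain ⟨hy₀, hy₁⟩ := hy
  have hgap := rowGap_lt
  -- Cut just above the midlines of the square: each quarter then lies in one or two of the disks.
  rcases le_total x 0.934 with hx | hx <;> rcases le_total y 0.934 with hy | hy
  · rcases le_total x y with hxy | hxy
    · exact ⟨6, by norm_num, by simp only [loop]; nlinarith⟩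
    · exact ⟨1, by norm_num, by simp only [loop, Complex.one_re, Complex.one_im]; nlinarith⟩
  · exact ⟨5, by norm_num, by simp only [loop]; nlinarith⟩
  · exact ⟨2, by norm_num, by simp only [loop]; nlinarith⟩
  · rcases le_total x y with hxy | hxy
    · exact ⟨4, by norm_num, by simp only [loop]; nlinarith⟩
    · exact ⟨3, by norm_num, by simp only [loop]; nlinarith⟩

lemma frame_mem_cover_of_corner {k : ℕ} {x y : ℝ}
    (hx : x ∈ Set.Icc (height (k + 1)) (height (k + 5)))
    (hy : y ∈ Set.Icc (height k) (height (k + 4))) : frame k ⟨x, y⟩ ∈ cover := by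
  have hxgap : height (k + 5) = height (k + 1) + rowGap := height_add_four (k + 1)
  have hygap := height_add_four k
  obtain ⟨i, hi, hd⟩ := exists_loop_dist_le_one (x := x - height (k + 1)) (y := y - height k)
    ⟨by linarith [hx.1], by linarith [hx.2]⟩ ⟨by linarith [hy.1], by linarith [hy.2]⟩
  refine mem_cover_of_dist_side_le (m := k) (j := rowSteps k + i)
    (by unfold sideSteps; omega) ?_
  rw [side_rowSteps_add, LinearIsometryEquiv.dist_map, Complex.dist_eq_re_im, Real.sqrt_le_one]
  simpa only [corner, Complex.add_re, Complex.add_im, sub_sub] using hd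

/-- The rectangle enclosed by the lines of the sides `k, …, k + 3`, in the frame of the last of
them. -/
def enclosed (k : ℕ) : Set ℂ :=
  Set.Icc (-height (k + 2)) (height k) ×ℂ Set.Icc (-height (k + 1)) (height (k + 3))

lemma frame_mem_cover_of_mem_enclosed_zero {x y : ℝ} (h : ⟨x, y⟩ ∈ enclosed 0) :
    frame 3 ⟨x, y⟩ ∈ cover := by
  obtain ⟨⟨hx₀, hx₁⟩, hy₀, hy₁⟩ := h
  rw [frame_eq_frame_succ, frame_add_four 0]
  refine frame_mem_cover_of_grid ⟨neg_le_neg hy₁, neg_le.mp hy₀⟩ (round (-y)) ?_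
  have hx : |x - height 0| ≤ 1 / 2 := by
    have := rowGap_lt
    have := rowGap_pos
    simp only [height] at *
    push_cast at *
    rw [abs_le]
    constructor <;> linarith
  have hy := abs_sub_round (-y)
  rw [Nat.cast_zero, zero_div, add_zero, ← sq_abs, ← sq_abs (x - _)]
  nlinarith [abs_nonneg (x - height 0), abs_nonneg (-y - round (-y))]

/-- The rectangle enclosed by the sides `k + 1, …, k + 4` is the preceding one together with the
strip between the parallel sides `k` and `k + 4`; the part of that strip which side `k` does not
reach is the square at the corner where it starts. -/
lemma frame_mem_cover_of_mem_enclosed (k : ℕ) {x y : ℝ} (h : ⟨x, y⟩ ∈ enclosed k) :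
    frame (k + 3) ⟨x, y⟩ ∈ cover := by
  induction k generalizing x y with
  | zero => exact frame_mem_cover_of_mem_enclosed_zero h
  | succ k ih =>
    obtain ⟨⟨hx₀, hx₁⟩, hy₀, hy₁⟩ := h
    rcases le_total y (height k) with hinner | hstrip
    · rw [show k + 1 + 3 = k + 3 + 1 by ring, frame_succ]
      exact ih ⟨⟨hy₀, hinner⟩, neg_le_neg hx₁, neg_le.mp hx₀⟩
    rw [show k + 1 + 3 = k + 4 by ring, frame_add_four]
    rcases le_or_gt (start k) x with hrow | hcorner
    · exact frame_mem_cover_of_strip hrow hx₀ hx₁ ⟨hstrip, hy₁⟩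
    cases k with
    | zero => exact absurd hx₀ hcorner.not_ge
    | succ k =>
      rw [frame_succ]
      exact frame_mem_cover_of_corner ⟨hstrip, hy₁⟩ ⟨le_neg.mp hcorner.le, neg_le.mp hx₀⟩

lemma cover_eq_univ : cover = Set.univ := by
  refine Set.eq_univ_of_forall fun p => ?_
  obtain ⟨k, hk, -⟩ := exists_le_height (norm_nonneg p)
  have hle (i : ℕ) : ‖p‖ ≤ height (k + i) :=
    hk.trans (height_strictMono.monotone (Nat.le_add_right k i))
  obtain ⟨z, rfl⟩ := (frame (k + 3)).surjective p
  rw [LinearIsometryEquiv.norm_map] at hk hle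
  have hre := abs_le.mp (Complex.abs_re_le_norm z)
  have him := abs_le.mp (Complex.abs_im_le_norm z)
  exact frame_mem_cover_of_mem_enclosed k ⟨⟨by linarith [hle 2], by linarith⟩,
    by linarith [hle 1], by linarith [hle 3]⟩

end Covering

section Density

lemma mem_openSquare_add_of_inter_nonempty {c : Pt} {r l : ℝ}
    (h : (closedBall c r ∩ openSquare l).Nonempty) : c ∈ openSquare (l + r) := by
  obtain ⟨q, hq, hq₀, hq₁⟩ := h
  have hcoord (i : Fin 2) : |c i| ≤ |q i| + r := by
    have : |q i - c i| ≤ r := (PiLp.norm_apply_le (q - c) i).trans (mem_closedBall_iff_norm.mp hq)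
    linarith [abs_sub_abs_le_abs_sub (c i) (q i), abs_sub_comm (c i) (q i)]
  exact ⟨by linarith [hcoord 0], by linarith [hcoord 1]⟩

lemma Ncount_le_natCast {C : ℕ → Pt} {l : ℝ} {N : ℕ}
    (h : ∀ n, C n ∈ openSquare (l + 1) → n < N) : Ncount C l ≤ N := by
  have hsub : {n | (closedBall (C n) 1 ∩ openSquare l).Nonempty} ⊆ (Finset.range N : Set ℕ) :=
    fun n hn => Finset.mem_coe.mpr (Finset.mem_range.mpr
      (h n (mem_openSquare_add_of_inter_nonempty hn)))
  have hcard := Set.encard_le_encard hsub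
  rw [Set.encard_coe_eq_coe_finsetCard, Finset.card_range] at hcard
  exact ENat.toENNReal_mono hcard

lemma tendsto_quadratic_density (a b c : ℝ) :
    Tendsto (fun l : ℝ => (a * l ^ 2 + b * l + c) * π / (4 * l ^ 2)) atTop
      (nhds (a * π / 4)) := by
  have hinv : Tendsto (fun l : ℝ => l⁻¹) atTop (nhds 0) := tendsto_inv_atTop_zero
  have hlim := ((((hinv.const_mul b).const_add a).add ((hinv.pow 2).const_mul c)).mul_const π
    ).div_const 4
  rw [mul_zero, add_zero, zero_pow two_ne_zero, mul_zero, add_zero] at hlim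
  refine hlim.congr' ?_
  filter_upwards [eventually_ne_atTop 0] with l hl
  field_simp

lemma limsup_density_le_of_Ncount_le {ι : Type*} {C : ι → Pt} {a b c : ℝ}
    (h : ∀ᶠ l in atTop, Ncount C l ≤ ENNReal.ofReal (a * l ^ 2 + b * l + c)) :
    limsup (fun l : ℝ => Ncount C l * ENNReal.ofReal π / ENNReal.ofReal (4 * l ^ 2)) atTop ≤
      ENNReal.ofReal (a * π / 4) := by
  rw [← (ENNReal.tendsto_ofReal (tendsto_quadratic_density a b c)).limsup_eq]
  refine limsup_le_limsup ?_
  filter_upwards [h, eventually_gt_atTop 0] with l hcount hl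
  rw [ENNReal.ofReal_div_of_pos (by positivity), ENNReal.ofReal_mul' Real.pi_pos.le]
  gcongr

lemma height_lt_of_side_mem_openSquare {m j : ℕ} {l : ℝ} (h : side m j ∈ openSquare l) :
    height m < l := by
  have him := (le_abs_self _).trans_lt (frame_mem_openSquare.mp h).2
  have : 0 ≤ (loop (j - rowSteps m)).im := loop_im_nonneg _
  linarith

lemma lt_blockStart_of_spiral_mem_openSquare {n m : ℕ} {l : ℝ} (h : spiral n ∈ openSquare l)
    (hl : l ≤ height m) : n < blockStart sideSteps m := by
  obtain ⟨k, j, hj, rfl⟩ := exists_eq_blockStart_add sideSteps_pos n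
  rw [spiral_blockStart_add hj.le] at h
  have hkm : k < m :=
    height_strictMono.lt_iff_lt.mp ((height_lt_of_side_mem_openSquare h).trans_le hl)
  calc blockStart sideSteps k + j < blockStart sideSteps (k + 1) := by rw [blockStart_succ]; omega
    _ ≤ blockStart sideSteps m := blockStart_mono hkm

lemma sideSteps_le (m : ℕ) : (sideSteps m : ℝ) ≤ rowGap * m / 2 + 11 := by
  have hsteps := gridSteps_lt (θ := m / 8) (start_lt_height_succ m).le
  have := rowGap_pos
  have := rowGap_lt
  unfold sideSteps rowSteps
  cases m <;> simp only [start, height] at * <;> push_cast at * <;> linarith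

lemma blockStart_sideSteps_le (m : ℕ) :
    (blockStart sideSteps m : ℝ) ≤ rowGap / 4 * m ^ 2 + 11 * m := by
  induction m with
  | zero => simp [blockStart]
  | succ m ih =>
    rw [blockStart_succ]
    push_cast
    linarith [sideSteps_le m, rowGap_pos]

lemma exists_Ncount_spiral_le :
    ∃ b c : ℝ, ∀ l > 0, Ncount spiral l ≤ ENNReal.ofReal (4 / rowGap * l ^ 2 + b * l + c) := by
  have hgap := rowGap_pos
  set d : ℝ := 4 / rowGap + 3 / 2 with hd
  refine ⟨2 * d + 44 / rowGap, rowGap / 4 * d ^ 2 + 11 * d, fun l hl => ?_⟩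
  obtain ⟨M, hheight, hM⟩ := exists_le_height (show 0 ≤ l + 1 by linarith)
  have hMle : (M : ℝ) ≤ 4 / rowGap * l + d := by linarith
  calc Ncount spiral l
    _ ≤ (blockStart sideSteps M : ℕ) :=
      Ncount_le_natCast fun n hn => lt_blockStart_of_spiral_mem_openSquare hn hheight
    _ = ENNReal.ofReal (blockStart sideSteps M) := (ENNReal.ofReal_natCast _).symm
    _ ≤ ENNReal.ofReal (rowGap / 4 * (4 / rowGap * l + d) ^ 2 + 11 * (4 / rowGap * l + d)) :=
      ENNReal.ofReal_le_ofReal ((blockStart_sideSteps_le M).trans (by gcongr))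
    _ = _ := by
      congr 1
      field_simp
      ring

lemma limsup_density_spiral_le :
    limsup (fun l : ℝ => Ncount spiral l * ENNReal.ofReal π / ENNReal.ofReal (4 * l ^ 2)) atTop ≤
      ENNReal.ofReal (2 * π / (2 + √3)) := by
  obtain ⟨b, c, hcount⟩ := exists_Ncount_spiral_le
  have hconst : 4 / rowGap * π / 4 = 2 * π / (2 + √3) := by
    unfold rowGap
    field_simp
  rw [← hconst]
  exact limsup_density_le_of_Ncount_le ((eventually_gt_atTop 0).mono hcount)

end Density

end SpiralCovering

/-- There is a sequence covering of the plane by unit disks, each disk containing the center of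
the next and with no turn sharper than `2π/3`, whose upper density is at most `2π/(2+√3)`. -/
theorem exists_seq_covering_density_le :
    ∃ C : ℕ → Pt,
      (⋃ n, closedBall (C n) 1) = Set.univ ∧
      (∀ n, 1 ≤ n → 0 < dist (C n) (C (n - 1)) ∧ dist (C n) (C (n - 1)) ≤ 1) ∧
      (∀ n, 1 ≤ n → 2 * π / 3 ≤ EuclideanGeometry.angle (C (n - 1)) (C n) (C (n + 1))) ∧
      Filter.limsup
          (fun l : ℝ => Ncount C l * ENNReal.ofReal π / ENNReal.ofReal (4 * l ^ 2))
          Filter.atTop ≤ ENNReal.ofReal (2 * π / (2 + Real.sqrt 3)) := by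
  refine ⟨SpiralCovering.spiral, SpiralCovering.cover_eq_univ, fun n hn => ?_, fun n hn => ?_,
    SpiralCovering.limsup_density_spiral_le⟩
  · obtain ⟨k, rfl⟩ := Nat.exists_eq_add_of_le' hn
    exact SpiralCovering.dist_spiral_succ k
  · obtain ⟨k, rfl⟩ := Nat.exists_eq_add_of_le' hn
    exact SpiralCovering.two_pi_div_three_le_angle_spiral k
end
end
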